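/- arXiv:2006.14816 — 2 statements merged into one kernel-verified Lean document; each statement's English description precedes it below -/
import Mathlib

section
/- In Case A, assume P(γ = ∞) = 0, E|L′| < ∞, and ∫_{[0,t_G)} |H(s)| dG(s) < ∞. Then M has integrable total variation, E(Var(M)_∞) < ∞, if and only if ∫_{[0,t_G)} Ḡ(s)·|dF/dG(s)| dG(s) < ∞. -/
open MeasureTheory Filter Set Topology
open scoped ENNReal NNReal Classical

noncomputable section

namespace SingleJump

variable {Ω : Type*}

/-- The event `{γ > t}`. -/
def jumpSet (γ : Ω → ℝ≥0∞) (t : ℝ≥0) : Set Ω := {ω | (t : ℝ≥0∞) < γ ω}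

/-- The collection `𝒻_t` of the single jump filtration generated by `γ` and the σ-field `m`:
`A ∈ 𝒻_t` iff `A` is `m`-measurable and `A ∩ {γ > t}` is either `∅` or `{γ > t}`. -/
def jumpColl (m : MeasurableSpace Ω) (γ : Ω → ℝ≥0∞) (t : ℝ≥0) : Set (Set Ω) :=
  {A | MeasurableSet[m] A ∧ (A ∩ jumpSet γ t = ∅ ∨ A ∩ jumpSet γ t = jumpSet γ t)}

/-- `𝒻_t` as a σ-field (the collection `jumpColl` generates itself, see Proposition 1(i)). -/
def jumpσ (m : MeasurableSpace Ω) (γ : Ω → ℝ≥0∞) (t : ℝ≥0) : MeasurableSpace Ω :=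
  MeasurableSpace.generateFrom (jumpColl m γ t)

/-- `𝒻_∞ = σ(⋃_{t ∈ ℝ₊} 𝒻_t)`. -/
def jumpσInf (m : MeasurableSpace Ω) (γ : Ω → ℝ≥0∞) : MeasurableSpace Ω :=
  ⨆ t : ℝ≥0, jumpσ m γ t

/-- A real function on `ℝ≥0` is càdlàg: right-continuous everywhere, finite left limits. -/
def Cadlag (f : ℝ≥0 → ℝ) : Prop :=
  (∀ t, ContinuousWithinAt f (Ici t) t) ∧
    ∀ t : ℝ≥0, 0 < t → ∃ c : ℝ, Tendsto f (𝓝[<] t) (𝓝 c)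

/-- The filter of times `t ∈ ℝ≥0` with `t ↑ a` strictly from the left (this is `atTop`
when `a = ∞`). -/
def leftF (a : ℝ≥0∞) : Filter ℝ≥0 := Filter.comap (fun t : ℝ≥0 => (t : ℝ≥0∞)) (𝓝[<] a)

/-- Total variation of `f` over `[0,∞)`, including `|f 0|` (the paper's convention `Var`). -/
def totalVar (f : ℝ≥0 → ℝ) : ℝ≥0∞ := (‖f 0‖₊ : ℝ≥0∞) + eVariationOn f Set.univ

/-- The process `M` stopped at the (possibly infinite) random time `T`. -/
def stopped (M : ℝ≥0 → Ω → ℝ) (T : Ω → ℝ≥0∞) : ℝ≥0 → Ω → ℝ :=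
  fun t ω => M (((t : ℝ≥0∞) ⊓ T ω).toNNReal) ω

section WithMeasurableSpace

variable [m : MeasurableSpace Ω]

/-- `Ḡ(t) = 1 - G(t) = P(γ > t)`. -/
def Gbar (μ : Measure Ω) (γ : Ω → ℝ≥0∞) (t : ℝ≥0) : ℝ :=
  (μ {ω | (t : ℝ≥0∞) < γ ω}).toReal

/-- `Ḡ(t-) = P(γ ≥ t)`, the left-hand limit of `Ḡ` at `t`. -/
def GbarLeft (μ : Measure Ω) (γ : Ω → ℝ≥0∞) (t : ℝ≥0) : ℝ :=
  (μ {ω | (t : ℝ≥0∞) ≤ γ ω}).toReal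

/-- `t_G = sup {t ∈ ℝ₊ : G(t) < 1}`, the right endpoint of the law of `γ`. -/
def tG (μ : Measure Ω) (γ : Ω → ℝ≥0∞) : ℝ≥0∞ :=
  sSup ((fun t : ℝ≥0 => (t : ℝ≥0∞)) '' {t : ℝ≥0 | μ {ω | γ ω ≤ (t : ℝ≥0∞)} < 1})

/-- `𝒯 = {t ∈ ℝ₊ : P(γ ≥ t) > 0}`. -/
def TT (μ : Measure Ω) (γ : Ω → ℝ≥0∞) : Set ℝ≥0 :=
  {t | 0 < μ {ω | (t : ℝ≥0∞) ≤ γ ω}}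

/-- Case A: `P(γ = t_G < ∞) = 0`. -/
def CaseA (μ : Measure Ω) (γ : Ω → ℝ≥0∞) : Prop :=
  μ {ω | γ ω = tG μ γ ∧ tG μ γ < ⊤} = 0

/-- Case B: `P(γ = t_G < ∞) > 0`. -/
def CaseB (μ : Measure Ω) (γ : Ω → ℝ≥0∞) : Prop :=
  0 < μ {ω | γ ω = tG μ γ ∧ tG μ γ < ⊤}

/-- `z ∈ L¹_loc(dG)` : `z` is Borel and `∫_{[0,t]} |z(s)| dG(s) < ∞` for every `t ∈ 𝒯`,
where `dG` is the law of `γ` (a measure on `[0,∞]`). -/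
def MemL1loc (μ : Measure Ω) (γ : Ω → ℝ≥0∞) (z : ℝ≥0 → ℝ) : Prop :=
  Measurable z ∧ ∀ t ∈ TT μ γ,
    IntegrableOn (fun x : ℝ≥0∞ => z x.toNNReal) (Icc 0 (t : ℝ≥0∞)) (μ.map γ)

/-- `F loc≪ G` with density `z = dF/dG` : `F(t) = F(0) + ∫_(0,t] z(s) dG(s)` for `t < t_G`. -/
def LocAC (μ : Measure Ω) (γ : Ω → ℝ≥0∞) (F z : ℝ≥0 → ℝ) : Prop :=
  MemL1loc μ γ z ∧ ∀ t : ℝ≥0, (t : ℝ≥0∞) < tG μ γ →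
    F t = F 0 + ∫ x in Ioc (0 : ℝ≥0∞) (t : ℝ≥0∞), z x.toNNReal ∂(μ.map γ)

/-- Condition M for the pair `(F, H)`. -/
def CondM (μ : Measure Ω) (γ : Ω → ℝ≥0∞) (F H : ℝ≥0 → ℝ) : Prop :=
  (∃ z, LocAC μ γ F z) ∧ MemL1loc μ γ H ∧
  (∀ t : ℝ≥0, (t : ℝ≥0∞) < tG μ γ →
    F t * Gbar μ γ t + ∫ x in Ioc (0 : ℝ≥0∞) (t : ℝ≥0∞), H x.toNNReal ∂(μ.map γ)
      = F 0 * Gbar μ γ 0) ∧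
  (CaseB μ γ → Tendsto F (leftF (tG μ γ)) (𝓝 (H (tG μ γ).toNNReal)))

/-- A stopping time of the single jump filtration: `{T ≤ t} ∈ 𝒻_t` for all `t ∈ ℝ₊`. -/
def IsSJStoppingTime (γ : Ω → ℝ≥0∞) (T : Ω → ℝ≥0∞) : Prop :=
  ∀ t : ℝ≥0, {ω | T ω ≤ (t : ℝ≥0∞)} ∈ jumpColl m γ t

/-- The martingale property on a set `S` of times, w.r.t. the single jump filtration. -/
def MartingaleOn (μ : Measure Ω) (γ : Ω → ℝ≥0∞) (M : ℝ≥0 → Ω → ℝ) (S : Set ℝ≥0) : Prop :=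
  (∀ t ∈ S, Measurable[jumpσ m γ t] (M t)) ∧ (∀ t ∈ S, Integrable (M t) μ) ∧
    ∀ s ∈ S, ∀ t ∈ S, s ≤ t → μ[M t|jumpσ m γ s] =ᵐ[μ] M s

/-- A uniformly integrable martingale w.r.t. the single jump filtration. -/
def UIMartingale (μ : Measure Ω) (γ : Ω → ℝ≥0∞) (M : ℝ≥0 → Ω → ℝ) : Prop :=
  MartingaleOn μ γ M Set.univ ∧ UniformIntegrable M 1 μ

/-- A local martingale w.r.t. the single jump filtration: adapted, a.s. càdlàg paths, and
there are stopping times `T n ↑ ∞` a.s. with each stopped process a UI martingale. -/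
def LocalMartingale (μ : Measure Ω) (γ : Ω → ℝ≥0∞) (M : ℝ≥0 → Ω → ℝ) : Prop :=
  (∀ t : ℝ≥0, Measurable[jumpσ m γ t] (M t)) ∧
  (∀ᵐ ω ∂μ, Cadlag fun t => M t ω) ∧
  ∃ T : ℕ → Ω → ℝ≥0∞,
    (∀ n, IsSJStoppingTime γ (T n)) ∧
    (∀ᵐ ω ∂μ, Monotone (fun n => T n ω) ∧ Tendsto (fun n => T n ω) atTop (𝓝 (⊤ : ℝ≥0∞))) ∧
    ∀ n, UIMartingale μ γ (stopped M (T n))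

/-- `E[L' | γ] = 0` for a (possibly only locally integrable) random variable `L'`. -/
def CondZeroGivenGamma (μ : Measure Ω) (γ : Ω → ℝ≥0∞) (L' : Ω → ℝ) : Prop :=
  ∀ B : Set ℝ≥0∞, MeasurableSet B → IntegrableOn L' (γ ⁻¹' B) μ →
    ∫ ω in γ ⁻¹' B, L' ω ∂μ = 0


lemma sum_cells (ν : Measure ℝ≥0) (φ : ℝ≥0 → ℝ≥0∞) (u : ℕ → ℝ≥0) (hu : Monotone u) (n : ℕ) :
    ∑ i ∈ Finset.range n, ∫⁻ x in Ioc (u i) (u (i + 1)), φ x ∂ν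
      = ∫⁻ x in Ioc (u 0) (u n), φ x ∂ν := by
  induction n with
  | zero => simp
  | succ n ih =>
    rw [Finset.sum_range_succ, ih, ← lintegral_union measurableSet_Ioc,
      Ioc_union_Ioc_eq_Ioc (hu (Nat.zero_le n)) (hu (Nat.le_succ n))]
    exact Set.disjoint_left.2 fun x hx hx' => absurd hx.2 (not_le.2 hx'.1)

lemma eVar_le_measure (ρ : Measure ℝ≥0) (f : ℝ≥0 → ℝ)
    (h : ∀ s t, s ≤ t → edist (f t) (f s) ≤ ρ (Ioc s t)) :
    eVariationOn f univ ≤ ρ univ := by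
  refine iSup_le ?_
  rintro ⟨n, u, hu, -⟩
  calc ∑ i ∈ Finset.range n, edist (f (u (i + 1))) (f (u i))
      ≤ ∑ i ∈ Finset.range n, ∫⁻ x in Ioc (u i) (u (i + 1)), 1 ∂ρ := by
        refine Finset.sum_le_sum fun i _ => ?_
        simpa using h _ _ (hu (Nat.le_succ i))
    _ = ρ (Ioc (u 0) (u n)) := by rw [sum_cells ρ _ u hu]; simp
    _ ≤ ρ univ := measure_mono (subset_univ _)

lemma cell_bound (ν : Measure ℝ≥0) [IsFiniteMeasure ν] (z : ℝ≥0 → ℝ) (hz : Integrable z ν)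
    (c : ℝ) (S : Set ℝ≥0) :
    ∫⁻ x in S, ‖z x‖ₑ ∂ν ≤ ‖∫ x in S, z x ∂ν‖ₑ + 2 * ∫⁻ x in S, ‖z x - c‖ₑ ∂ν := by
  have h1 : ∫⁻ x in S, ‖z x‖ₑ ∂ν ≤ ∫⁻ x in S, ‖z x - c‖ₑ ∂ν + ‖c‖ₑ * ν S := by
    calc ∫⁻ x in S, ‖z x‖ₑ ∂ν ≤ ∫⁻ x in S, (‖z x - c‖ₑ + ‖c‖ₑ) ∂ν := by
          refine lintegral_mono fun x => ?_
          calc ‖z x‖ₑ = ‖(z x - c) + c‖ₑ := by simp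
            _ ≤ _ := enorm_add_le _ _
      _ = _ := by rw [lintegral_add_right _ measurable_const]; simp
  have h2 : ‖c‖ₑ * ν S ≤ ‖∫ x in S, z x ∂ν‖ₑ + ∫⁻ x in S, ‖z x - c‖ₑ ∂ν := by
    have e : ‖c‖ₑ * ν S = ‖∫ x in S, c ∂ν‖ₑ := by
      simp only [integral_const, smul_eq_mul, enorm_mul]
      rw [mul_comm]
      congr 1
      simp [measureReal_def, Real.enorm_eq_ofReal]
    have e2 : ∫ x in S, c ∂ν = ∫ x in S, z x ∂ν - ∫ x in S, (z x - c) ∂ν := by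
      rw [integral_sub hz.integrableOn (integrable_const c)]; ring
    rw [e, e2]
    exact (enorm_sub_le).trans (add_le_add le_rfl (enorm_integral_le_lintegral_enorm _))
  calc _ ≤ _ := h1
    _ ≤ _ := add_le_add le_rfl h2
    _ = _ := by ring

lemma key_var (ν : Measure ℝ≥0) [IsFiniteMeasure ν] (z : ℝ≥0 → ℝ) (hz : Integrable z ν)
    (t : ℝ≥0) (f : ℝ≥0 → ℝ)
    (hf : ∀ a b, a ≤ b → b ≤ t → edist (f b) (f a) = ‖∫ x in Ioc a b, z x ∂ν‖ₑ) :
    ∫⁻ x in Ioc 0 t, ‖z x‖ₑ ∂ν ≤ eVariationOn f univ := by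
  have main : ∀ ε : ℝ≥0, 0 < ε → ∫⁻ x in Ioc 0 t, ‖z x‖ₑ ∂ν ≤
      eVariationOn f univ + 2 * (ε + ε * ν univ) := by
    intro ε hε
    obtain ⟨h, hc, hle, hcont, hint⟩ := hz.exists_hasCompactSupport_lintegral_sub_le
      (ε := (ε : ℝ≥0∞)) (by exact_mod_cast hε.ne')
    have huc : UniformContinuous h := hc.uniformContinuous_of_continuous hcont
    obtain ⟨δ, hδ, hδ'⟩ := Metric.uniformContinuous_iff.1 huc ε (by exact_mod_cast hε)
    obtain ⟨n, hn⟩ := exists_nat_gt ((t : ℝ) / δ)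
    have hn0 : (0 : ℝ) < n := lt_of_le_of_lt (by positivity) hn
    have hnn : (n : ℝ≥0) ≠ 0 := by exact_mod_cast hn0.ne'
    let u : ℕ → ℝ≥0 := fun i => i * (t / n)
    have hu : Monotone u := by
      intro i j hij
      simp only [u]
      gcongr
    have hun : u n = t := by simp only [u]; field_simp
    have hu0 : u 0 = 0 := by simp [u]
    have cell : ∀ i ∈ Finset.range n, ∫⁻ x in Ioc (u i) (u (i + 1)), ‖z x‖ₑ ∂ν ≤
        edist (f (u (i + 1))) (f (u i)) +
          2 * ∫⁻ x in Ioc (u i) (u (i + 1)), (‖z x - h x‖ₑ + ε) ∂ν := by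
      intro i hi
      refine (cell_bound ν z hz (h (u i)) _).trans ?_
      rw [hf _ _ (hu (Nat.le_succ i)) (by rw [← hun]; exact hu (Finset.mem_range.1 hi))]
      gcongr _ + 2 * ?_
      refine setLIntegral_mono' measurableSet_Ioc fun x hx => ?_
      have hd : dist x (u i) < δ := by
        have h1 : (u i : ℝ) < x := by exact_mod_cast hx.1
        have h2 : (x : ℝ) ≤ u (i + 1) := by exact_mod_cast hx.2
        have h3 : (u (i + 1) : ℝ) = u i + t / n := by simp [u]; ring
        rw [NNReal.dist_eq, abs_of_pos (by linarith)]
        have : (t : ℝ) / n < δ := by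
          rw [div_lt_iff₀ hδ] at hn
          rw [div_lt_iff₀ hn0]; linarith
        linarith
      have h5 := hδ' hd
      calc ‖z x - h (u i)‖ₑ = ‖(z x - h x) + (h x - h (u i))‖ₑ := by congr 1; ring
        _ ≤ ‖z x - h x‖ₑ + ‖h x - h (u i)‖ₑ := enorm_add_le _ _
        _ ≤ _ := by
          gcongr
          rw [Real.dist_eq] at h5
          rw [Real.enorm_eq_ofReal_abs]
          exact ENNReal.ofReal_le_of_le_toReal (by simpa using h5.le)
    calc ∫⁻ x in Ioc 0 t, ‖z x‖ₑ ∂ν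
        = ∑ i ∈ Finset.range n, ∫⁻ x in Ioc (u i) (u (i + 1)), ‖z x‖ₑ ∂ν := by
          rw [sum_cells ν _ u hu, hun, hu0]
      _ ≤ _ := Finset.sum_le_sum cell
      _ = ∑ i ∈ Finset.range n, edist (f (u (i + 1))) (f (u i)) +
          2 * ∫⁻ x in Ioc 0 t, (‖z x - h x‖ₑ + ε) ∂ν := by
          rw [Finset.sum_add_distrib, ← Finset.mul_sum, sum_cells ν _ u hu, hun, hu0]
      _ ≤ _ := by
          gcongr
          · exact eVariationOn.sum_le hu (fun _ => mem_univ _)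
          · refine (setLIntegral_le_lintegral _ _).trans ?_
            rw [lintegral_add_right _ measurable_const]
            simp only [lintegral_const]
            gcongr
  refine ge_of_tendsto (x := 𝓝[>] (0 : ℝ≥0)) (f := fun ε : ℝ≥0 =>
      eVariationOn f univ + 2 * ((ε : ℝ≥0∞) + ε * ν univ)) ?_ ?_
  · have h1 : Tendsto (fun ε : ℝ≥0 => (ε : ℝ≥0∞)) (𝓝[>] (0 : ℝ≥0)) (𝓝 0) := by
      have := (ENNReal.continuous_coe.tendsto (0 : ℝ≥0)).mono_left
        (nhdsWithin_le_nhds (s := Ioi 0))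
      simpa using this
    have h2 : Tendsto (fun ε : ℝ≥0 => (ε : ℝ≥0∞) * ν univ) (𝓝[>] (0 : ℝ≥0)) (𝓝 0) := by
      simpa using ENNReal.Tendsto.mul_const h1 (Or.inr (measure_ne_top ν univ))
    have h3 := (h1.add h2)
    have h4 := ENNReal.Tendsto.const_mul (a := 2) h3 (Or.inr (by simp))
    simpa using h4.const_add (eVariationOn f univ)
  · filter_upwards [self_mem_nhdsWithin] with ε hε using main ε hε

lemma key_var_Ioo (ν : Measure ℝ≥0) [IsFiniteMeasure ν] (z : ℝ≥0 → ℝ)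
    (g : ℝ≥0) (f : ℝ≥0 → ℝ) (hz : IntegrableOn z (Ioc 0 g) ν)
    (hf : ∀ a b, a ≤ b → b < g → edist (f b) (f a) = ‖∫ x in Ioc a b, z x ∂ν‖ₑ) :
    ∫⁻ x in Ioo 0 g, ‖z x‖ₑ ∂ν ≤ eVariationOn f univ := by
  rcases eq_or_ne g 0 with rfl | hg
  · simp
  obtain ⟨u, hu, hlt, hlim⟩ := exists_seq_strictMono_tendsto' (pos_iff_ne_zero.2 hg)
  have hU : Ioo 0 g = ⋃ n, Ioc 0 (u n) := by
    ext x
    simp only [mem_Ioo, mem_iUnion, mem_Ioc]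
    constructor
    · rintro ⟨h0, hx⟩
      obtain ⟨n, hn⟩ := (hlim.eventually (lt_mem_nhds hx)).exists
      exact ⟨n, h0, hn.le⟩
    · rintro ⟨n, h0, hn⟩
      exact ⟨h0, hn.trans_lt (hlt n).2⟩
  rw [hU, setLIntegral_iUnion_of_directed]
  · refine iSup_le fun n => ?_
    have key := key_var (ν.restrict (Ioc 0 g)) z hz (u n) f ?_
    · rwa [Measure.restrict_restrict measurableSet_Ioc, inter_eq_left.2] at key
      exact Ioc_subset_Ioc_right (hlt n).2.le
    · intro a b hab hb
      rw [Measure.restrict_restrict measurableSet_Ioc, inter_eq_left.2]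
      · exact hf a b hab (hb.trans_lt (hlt n).2)
      · exact Ioc_subset_Ioc zero_le (hb.trans (hlt n).2.le)
  · exact Monotone.directed_le fun m n h => Ioc_subset_Ioc_right (hu.monotone h)

lemma var_upper (ν : Measure ℝ≥0) (z F : ℝ≥0 → ℝ) (g : ℝ≥0) (L : ℝ) (f : ℝ≥0 → ℝ)
    (hf1 : ∀ t < g, f t = F t) (hf2 : ∀ t, g ≤ t → f t = L)
    (hF : ∀ a b, a ≤ b → b < g → edist (F b) (F a) = ‖∫ x in Ioc a b, z x ∂ν‖ₑ) :
    eVariationOn f univ ≤ ‖F 0‖ₑ + ‖L‖ₑ + 2 * ∫⁻ x in Ioo 0 g, ‖z x‖ₑ ∂ν := by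
  set I := ∫⁻ x in Ioo 0 g, ‖z x‖ₑ ∂ν with hI
  set J := ‖F 0‖ₑ + ‖L‖ₑ + I with hJ
  have hle : ∀ a b, a ≤ b → b < g → edist (F b) (F a) ≤ ∫⁻ x in Ioc a b, ‖z x‖ₑ ∂ν := by
    intro a b hab hb
    rw [hF a b hab hb]
    exact enorm_integral_le_lintegral_enorm _
  have key := eVar_le_measure
    ((ν.restrict (Ioo 0 g)).withDensity (fun x => ‖z x‖ₑ) + J • Measure.dirac g) f ?_
  · refine key.trans (le_of_eq ?_)
    simp only [Measure.coe_add, Pi.add_apply, Measure.smul_apply, smul_eq_mul, measure_univ,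
      mul_one, withDensity_apply _ MeasurableSet.univ, Measure.restrict_univ]
    rw [← hI, hJ]; ring
  · intro s t hst
    simp only [Measure.coe_add, Pi.add_apply, Measure.smul_apply, smul_eq_mul,
      withDensity_apply _ measurableSet_Ioc]
    rcases lt_or_ge t g with ht | ht
    · rw [hf1 t ht, hf1 s (hst.trans_lt ht), Measure.restrict_restrict measurableSet_Ioc,
        inter_eq_left.2]
      · exact (hle s t hst ht).trans le_self_add
      · intro x hx
        exact ⟨zero_le.trans_lt hx.1, hx.2.trans_lt ht⟩
    rcases lt_or_ge s g with hs | hs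
    · rw [hf2 t ht, hf1 s hs, Measure.dirac_apply' _ measurableSet_Ioc,
        indicator_of_mem (show g ∈ Ioc s t from ⟨hs, ht⟩)]
      refine le_trans ?_ le_add_self
      simp only [Pi.one_apply, mul_one]
      have h1 : edist (F s) (F 0) ≤ I := (hle 0 s zero_le hs).trans
        (lintegral_mono_set fun x hx => ⟨hx.1, hx.2.trans_lt hs⟩)
      calc edist L (F s) ≤ edist L 0 + edist 0 (F 0) + edist (F 0) (F s) :=
            edist_triangle4 _ _ _ _
        _ ≤ J := by
          rw [edist_comm 0 (F 0), edist_comm (F 0) (F s), edist_zero_right, edist_zero_right, hJ,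
            add_comm ‖L‖ₑ]
          gcongr
    · rw [hf2 t ht, hf2 s hs]; simp

lemma tonelli_gamma {Ω : Type*} [MeasurableSpace Ω] (μ : Measure Ω) [IsFiniteMeasure μ]
    (ν : Measure ℝ≥0) [IsFiniteMeasure ν] (g : Ω → ℝ≥0) (hg : Measurable g)
    (φ : ℝ≥0 → ℝ≥0∞) (hφ : Measurable φ) :
    ∫⁻ ω, (∫⁻ s in Ioo 0 (g ω), φ s ∂ν) ∂μ
      = ∫⁻ s in Ioi 0, φ s * μ {ω | s < g ω} ∂ν := by
  have e1 : ∀ ω, ∫⁻ s in Ioo 0 (g ω), φ s ∂ν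
      = ∫⁻ s in Ioi 0, {p : Ω × ℝ≥0 | p.2 < g p.1}.indicator (fun p => φ p.2) (ω, s) ∂ν := by
    intro ω
    have : Ioo 0 (g ω) = Iio (g ω) ∩ Ioi 0 := by ext; simp [and_comm]
    rw [this, ← Measure.restrict_restrict measurableSet_Iio, ← lintegral_indicator measurableSet_Iio]
    rfl
  have hms : MeasurableSet {p : Ω × ℝ≥0 | p.2 < g p.1} :=
    measurableSet_lt measurable_snd (hg.comp measurable_fst)
  simp_rw [e1]
  rw [lintegral_lintegral_swap]
  · refine lintegral_congr fun s => ?_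
    have : ∀ ω, {p : Ω × ℝ≥0 | p.2 < g p.1}.indicator (fun p => φ p.2) (ω, s)
      = {ω | s < g ω}.indicator (fun _ => φ s) ω := fun ω => rfl
    simp_rw [this]
    rw [lintegral_indicator_const (measurableSet_lt measurable_const hg)]
  · exact ((hφ.comp measurable_snd).indicator hms).aemeasurable

/-- **Theorem 5 (iii.iii), Case A.** Assume `P(γ = ∞) = 0`, `E|L'| < ∞` and
`∫_{[0,t_G)} |H| dG < ∞`. Then `M` has integrable total variation iff
`∫_{[0,t_G)} Ḡ(s)|dF/dG(s)| dG(s) < ∞`. -/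
theorem stmt_16
(μ : Measure Ω) [IsProbabilityMeasure μ] (γ : Ω → ℝ≥0∞)
    (hγ : Measurable γ) (hpos : 0 < μ {ω | 0 < γ ω})
    (M : ℝ≥0 → Ω → ℝ) (F H : ℝ≥0 → ℝ) (L' : Ω → ℝ)
    (hM : LocalMartingale μ γ M)
    (hFH : CondM μ γ F H)
    (hL'meas : Measurable L')
    (hL'int : ∀ t ∈ TT μ γ,
      Integrable (fun ω => ({ω' | γ ω' ≤ (t : ℝ≥0∞)}.indicator L') ω) μ)
    (hL'cond : CondZeroGivenGamma μ γ L')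
    (hrepr : ∀ᵐ ω ∂μ, ∀ t : ℝ≥0,
      M t ω = if (t : ℝ≥0∞) < γ ω then F t else H (γ ω).toNNReal + L' ω)
    (hA : CaseA μ γ)
    (hfin : μ {ω | γ ω = ⊤} = 0)
    (hL'fin : Integrable L' μ)
    (hHfin : IntegrableOn (fun x : ℝ≥0∞ => H x.toNNReal) (Iio (tG μ γ)) (μ.map γ)) :
    (∫⁻ ω, totalVar (fun t => M t ω) ∂μ < ⊤) ↔
      (∀ z : ℝ≥0 → ℝ, LocAC μ γ F z →
        IntegrableOn (fun x : ℝ≥0∞ => Gbar μ γ x.toNNReal * z x.toNNReal)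
          (Ioo 0 (tG μ γ)) (μ.map γ)) := by
  have hTT : ∀ t : ℝ≥0, (t : ℝ≥0∞) < tG μ γ → t ∈ TT μ γ := by
    intro t ht
    obtain ⟨_, ⟨s, hs, rfl⟩, hts⟩ := lt_sSup_iff.1 ht
    have hs' : μ {ω | γ ω ≤ (s : ℝ≥0∞)} < 1 := hs
    have hts' : (t : ℝ≥0∞) < s := hts
    have hm : MeasurableSet {ω | γ ω ≤ (s : ℝ≥0∞)} := measurableSet_le hγ measurable_const
    have h1 : 0 < μ {ω | γ ω ≤ (s : ℝ≥0∞)}ᶜ := by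
      rw [prob_compl_eq_one_sub hm]
      exact tsub_pos_of_lt hs'
    refine h1.trans_le (measure_mono fun ω hω => ?_)
    have : (s : ℝ≥0∞) < γ ω := not_le.1 hω
    exact (hts'.trans this).le
  have hle : ∀ t : ℝ≥0, tG μ γ < t → ∀ᵐ ω ∂μ, γ ω ≤ t := by
    intro t ht
    by_contra hcon
    have hm : MeasurableSet {ω | γ ω ≤ (t : ℝ≥0∞)} := measurableSet_le hγ measurable_const
    have : μ {ω | γ ω ≤ (t : ℝ≥0∞)} < 1 := by
      refine lt_of_le_of_ne prob_le_one fun h => hcon ?_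
      rw [ae_iff]
      exact (prob_compl_eq_zero_iff hm).2 h
    exact absurd (le_sSup (mem_image_of_mem _ this) : (t : ℝ≥0∞) ≤ tG μ γ) (not_le.2 ht)
  have htop : ∀ᵐ ω ∂μ, γ ω ≠ ⊤ := by rw [ae_iff]; simpa using hfin
  have hlt : ∀ᵐ ω ∂μ, γ ω < tG μ γ := by
    rcases eq_or_ne (tG μ γ) ⊤ with h | h
    · filter_upwards [htop] with ω hω
      rw [h]; exact lt_top_iff_ne_top.2 hω
    · have hne : ∀ᵐ ω ∂μ, γ ω ≠ tG μ γ := by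
        rw [ae_iff]
        refine measure_mono_null (fun ω hω => ?_) hA
        exact ⟨not_not.1 hω, lt_top_iff_ne_top.2 h⟩
      obtain ⟨u, -, hu, hlim⟩ := exists_seq_strictAnti_tendsto (tG μ γ).toNNReal
      have hu' : ∀ n, tG μ γ < u n := by
        intro n
        rw [← ENNReal.coe_toNNReal h]
        exact_mod_cast hu n
      have hall : ∀ᵐ ω ∂μ, ∀ n, γ ω ≤ u n := ae_all_iff.2 fun n => hle _ (hu' n)
      filter_upwards [hne, hall] with ω h1 h2
      refine lt_of_le_of_ne ?_ h1
      rw [← ENNReal.coe_toNNReal h]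
      exact ge_of_tendsto' ((ENNReal.continuous_coe.tendsto _).comp hlim) h2
  set g : Ω → ℝ≥0 := fun ω => (γ ω).toNNReal with hgdef
  have hg : Measurable g := hγ.ennreal_toNNReal
  have hgγ : ∀ᵐ ω ∂μ, (g ω : ℝ≥0∞) = γ ω := by
    filter_upwards [htop] with ω hω using ENNReal.coe_toNNReal hω
  set ν0 : Measure ℝ≥0∞ := μ.map γ with hν0
  have : IsProbabilityMeasure ν0 := Measure.isProbabilityMeasure_map hγ.aemeasurable
  have htn : Measurable ENNReal.toNNReal := ENNReal.measurable_toNNReal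
  set ν : Measure ℝ≥0 := ν0.map ENNReal.toNNReal with hν
  have : IsProbabilityMeasure ν := Measure.isProbabilityMeasure_map htn.aemeasurable
  have hpre : ∀ t : ℝ≥0, ENNReal.toNNReal ⁻¹' (Ioc 0 t) = Ioc (0 : ℝ≥0∞) t := by
    intro t
    ext x
    induction x using ENNReal.recTopCoe with
    | top => simp
    | coe x => simp
  have hpre2 : ENNReal.toNNReal ⁻¹' {s : ℝ≥0 | 0 < s ∧ (s : ℝ≥0∞) < tG μ γ}
      = Ioo (0 : ℝ≥0∞) (tG μ γ) := by
    ext x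
    induction x using ENNReal.recTopCoe with
    | top => simp
    | coe x => simp
  have hmI : MeasurableSet {s : ℝ≥0 | 0 < s ∧ (s : ℝ≥0∞) < tG μ γ} := by
    refine (measurableSet_lt measurable_const measurable_id).inter ?_
    exact measurableSet_lt measurable_coe_nnreal_ennreal measurable_const
  -- consequences of local absolute continuity
  have hzint : ∀ z, LocAC μ γ F z → ∀ t : ℝ≥0, (t : ℝ≥0∞) < tG μ γ →
      IntegrableOn z (Ioc 0 t) ν := by
    intro z hz t ht
    have h1 := (hz.1.2 t (hTT t ht)).mono_set (Ioc_subset_Icc_self)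
    rw [IntegrableOn, hν, Measure.restrict_map htn measurableSet_Ioc, hpre,
      integrable_map_measure hz.1.1.aestronglyMeasurable htn.aemeasurable]
    exact h1
  have hFdiff : ∀ z, LocAC μ γ F z → ∀ a b : ℝ≥0, a ≤ b → (b : ℝ≥0∞) < tG μ γ →
      edist (F b) (F a) = ‖∫ x in Ioc a b, z x ∂ν‖ₑ := by
    intro z hz a b hab hb
    have hF' : ∀ t : ℝ≥0, (t : ℝ≥0∞) < tG μ γ → F t = F 0 + ∫ x in Ioc 0 t, z x ∂ν := by
      intro t ht
      rw [hz.2 t ht, hν, setIntegral_map measurableSet_Ioc hz.1.1.aestronglyMeasurable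
        htn.aemeasurable, hpre]
    have ha : (a : ℝ≥0∞) < tG μ γ := lt_of_le_of_lt (by exact_mod_cast hab) hb
    have hU : ∫ x in Ioc 0 b, z x ∂ν = ∫ x in Ioc 0 a, z x ∂ν + ∫ x in Ioc a b, z x ∂ν := by
      rw [← setIntegral_union, Ioc_union_Ioc_eq_Ioc zero_le hab]
      · exact Set.disjoint_left.2 fun x hx hx' => absurd hx.2 (not_le.2 hx'.1)
      · exact measurableSet_Ioc
      · exact hzint z hz a ha
      · exact (hzint z hz b hb).mono_set (Ioc_subset_Ioc_left zero_le)
    rw [edist_eq_enorm_sub, hF' b hb, hF' a ha, hU]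
    congr 1
    ring
  have hGe : ∀ s : ℝ≥0, ‖Gbar μ γ s‖ₑ = μ {ω | s < g ω} := by
    intro s
    rw [Gbar, Real.enorm_eq_ofReal ENNReal.toReal_nonneg, ENNReal.ofReal_toReal (measure_ne_top _ _)]
    refine measure_congr ?_
    filter_upwards [hgγ] with ω hω
    apply propext
    change (s : ℝ≥0∞) < γ ω ↔ s < g ω
    rw [← hω]
    exact ENNReal.coe_lt_coe
  have hGmeas : Measurable (Gbar μ γ) := by
    have : Antitone (Gbar μ γ) := by
      intro s t hst
      refine ENNReal.toReal_mono (measure_ne_top _ _) (measure_mono fun ω hω => ?_)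
      exact lt_of_le_of_lt (by exact_mod_cast hst) (show (t : ℝ≥0∞) < γ ω from hω)
    exact this.measurable
  -- reformulation of the right-hand side
  have hrhs : ∀ z, LocAC μ γ F z →
      (IntegrableOn (fun x : ℝ≥0∞ => Gbar μ γ x.toNNReal * z x.toNNReal)
          (Ioo 0 (tG μ γ)) ν0 ↔
        ∫⁻ ω, (∫⁻ s in Ioo 0 (g ω), ‖z s‖ₑ ∂ν) ∂μ < ⊤) := by
    intro z hz
    have hm : Measurable (fun s => Gbar μ γ s * z s) := hGmeas.mul hz.1.1
    have e1 : IntegrableOn (fun x : ℝ≥0∞ => Gbar μ γ x.toNNReal * z x.toNNReal)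
          (Ioo 0 (tG μ γ)) ν0 ↔
        IntegrableOn (fun s => Gbar μ γ s * z s) {s : ℝ≥0 | 0 < s ∧ (s : ℝ≥0∞) < tG μ γ} ν := by
      rw [IntegrableOn, IntegrableOn, hν, Measure.restrict_map htn hmI, hpre2,
        integrable_map_measure hm.aestronglyMeasurable htn.aemeasurable]
      rfl
    rw [e1, IntegrableOn, Integrable, and_iff_right hm.aestronglyMeasurable,
      hasFiniteIntegral_iff_enorm, tonelli_gamma μ ν g hg _ hz.1.1.enorm]
    have e2 : ∫⁻ s in {s : ℝ≥0 | 0 < s ∧ (s : ℝ≥0∞) < tG μ γ}, ‖Gbar μ γ s * z s‖ₑ ∂ν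
        = ∫⁻ s in Ioi 0, ‖z s‖ₑ * μ {ω | s < g ω} ∂ν := by
      rw [← lintegral_indicator hmI, ← lintegral_indicator measurableSet_Ioi]
      refine lintegral_congr fun s => ?_
      by_cases h0 : 0 < s
      · by_cases h1 : (s : ℝ≥0∞) < tG μ γ
        · rw [indicator_of_mem (show s ∈ {s : ℝ≥0 | 0 < s ∧ (s : ℝ≥0∞) < tG μ γ} from ⟨h0, h1⟩),
            indicator_of_mem (show s ∈ Ioi 0 from h0), enorm_mul, hGe, mul_comm]
        · rw [indicator_of_notMem (fun h => h1 h.2), indicator_of_mem (show s ∈ Ioi 0 from h0)]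
          have : μ {ω | s < g ω} = 0 := by
            rw [measure_eq_zero_iff_ae_notMem]
            filter_upwards [hlt, hgγ] with ω h2 h3 h4
            have h4' : (s : ℝ≥0∞) < g ω := ENNReal.coe_lt_coe.2 h4
            exact h1 (h4'.trans (h3 ▸ h2))
          rw [this, mul_zero]
      · rw [indicator_of_notMem (fun h => h0 h.1), indicator_of_notMem (show s ∉ Ioi 0 from h0)]
    rw [e2]
  constructor
  · intro hfinv z hz
    rw [hrhs z hz]
    refine lt_of_le_of_lt (lintegral_mono_ae ?_) hfinv
    filter_upwards [hlt, hgγ, hrepr] with ω h1 h2 h3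
    refine le_trans (key_var_Ioo ν z (g ω) (fun t => M t ω) ?_ ?_) le_add_self
    · exact hzint z hz _ (h2 ▸ h1)
    · intro a b hab hb
      have hb' : (b : ℝ≥0∞) < γ ω := by rw [← h2]; exact_mod_cast hb
      have ha' : (a : ℝ≥0∞) < γ ω := by rw [← h2]; exact_mod_cast hab.trans_lt hb
      simp only [h3, hb', ha', if_true]
      exact hFdiff z hz a b hab (hb'.trans h1)
  · intro hall
    obtain ⟨z, hz⟩ := hFH.1
    have hI := (hrhs z hz).1 (hall z hz)
    have hHm : Measurable H := hFH.2.1.1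
    have hHint : Integrable (fun ω => H (g ω)) μ := by
      have h1 : Integrable (fun x : ℝ≥0∞ => H x.toNNReal) ν0 := by
        rw [← Measure.restrict_eq_self_of_ae_mem (s := Iio (tG μ γ)) (μ := ν0)]
        · exact hHfin
        · exact (ae_map_iff hγ.aemeasurable measurableSet_Iio).2 hlt
      exact (integrable_map_measure (hHm.comp htn).aestronglyMeasurable hγ.aemeasurable).1 h1
    have hbound : ∀ᵐ ω ∂μ, totalVar (fun t => M t ω) ≤
        2 * (‖F 0‖ₑ + (‖H (g ω)‖ₑ + (‖L' ω‖ₑ + ∫⁻ s in Ioo 0 (g ω), ‖z s‖ₑ ∂ν))) := by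
      filter_upwards [hlt, hgγ, hrepr] with ω h1 h2 h3
      have hlow : ∀ t < g ω, M t ω = F t := by
        intro t ht
        have : (t : ℝ≥0∞) < γ ω := by rw [← h2]; exact_mod_cast ht
        simp only [h3, this, if_true]
      have hhigh : ∀ t, g ω ≤ t → M t ω = H (g ω) + L' ω := by
        intro t ht
        have : ¬ (t : ℝ≥0∞) < γ ω := by rw [← h2, not_lt]; exact_mod_cast ht
        simp only [h3, this, if_false]
        rfl
      have hv := var_upper ν z F (g ω) (H (g ω) + L' ω) (fun t => M t ω) hlow hhigh
        (fun a b hab hb => hFdiff z hz a b hab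
          ((show (b : ℝ≥0∞) < γ ω by rw [← h2]; exact_mod_cast hb).trans h1))
      have hL : ‖H (g ω) + L' ω‖ₑ ≤ ‖H (g ω)‖ₑ + ‖L' ω‖ₑ := enorm_add_le _ _
      have h0 : ‖M 0 ω‖ₑ ≤ ‖F 0‖ₑ + (‖H (g ω)‖ₑ + ‖L' ω‖ₑ) := by
        rcases lt_or_ge 0 (g ω) with h | h
        · rw [hlow 0 h]; exact le_self_add
        · rw [hhigh 0 h]; exact hL.trans le_add_self
      calc totalVar (fun t => M t ω) = ‖M 0 ω‖ₑ + eVariationOn (fun t => M t ω) univ := rfl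
        _ ≤ (‖F 0‖ₑ + (‖H (g ω)‖ₑ + ‖L' ω‖ₑ)) + (‖F 0‖ₑ + (‖H (g ω)‖ₑ + ‖L' ω‖ₑ)
              + 2 * ∫⁻ s in Ioo 0 (g ω), ‖z s‖ₑ ∂ν) := by
          refine add_le_add h0 (hv.trans ?_)
          gcongr
        _ = _ := by ring
    refine lt_of_le_of_lt (lintegral_mono_ae hbound) ?_
    rw [lintegral_const_mul' _ _ (by simp), lintegral_add_left measurable_const,
      lintegral_add_left (show Measurable fun ω => ‖H (g ω)‖ₑ from (hHm.comp hg).enorm), lintegral_add_left hL'meas.enorm]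
    have a1 := hasFiniteIntegral_iff_enorm.1 hHint.2
    have a2 := hasFiniteIntegral_iff_enorm.1 hL'fin.2
    refine ENNReal.mul_lt_top (by simp) (ENNReal.add_lt_top.2 ⟨by simp, ?_⟩)
    exact ENNReal.add_lt_top.2 ⟨a1, ENNReal.add_lt_top.2 ⟨a2, hI⟩⟩

end WithMeasurableSpace

end SingleJump
end
end

section
/- Let V be a random variable with {γ = 0} ⊆ {V = 0} and E(|V|·1_{γ≤t}) < ∞ for every t ∈ 𝒯. Let K : 𝒯 → ℝ be a Borel function with E(V·1_{γ≤t}) = ∫_{[0,t]} K(s) dG(s) for all t ∈ 𝒯 (i.e. K(t) = E[V | γ = t]), and define F(t) = ∫_{(0,t]} Ḡ(s−)⁻¹ K(s) dG(s) for 0 ≤ t < t_G, and in Case B F(t_G) = lim_{t↑t_G} F(t). Define A_t = F(t∧γ) in Case A, and A_t = F(t∧γ) + K(t_G)·1_{γ≥t_G}·1_{t≥t_G} in Case B. Then the process M = A − X, where X_t = V·1_{t≥γ}, is a local martingale with respect to 𝔽 (so that A is the compensator of the single jump process X). -/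
open MeasureTheory Filter Set Topology
open scoped ENNReal NNReal Classical

noncomputable section

namespace SingleJump

variable {Ω : Type*}

section WithMeasurableSpace

variable [m : MeasurableSpace Ω]

lemma mem_jumpColl_of_measurableSet {γ : Ω → ℝ≥0∞} {t : ℝ≥0} {B : Set Ω}
    (hB : MeasurableSet[jumpσ m γ t] B) : B ∈ jumpColl m γ t := by
  induction B, hB using MeasurableSpace.generateFrom_induction with
  | hC s hs _ => exact hs
  | empty => exact ⟨MeasurableSet.empty, Or.inl (by simp)⟩
  | compl s _ ih =>
    refine ⟨ih.1.compl, ?_⟩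
    rcases ih.2 with h | h
    · right
      ext ω
      have := Set.ext_iff.1 h ω
      simp only [mem_inter_iff, mem_empty_iff_false, mem_compl_iff] at this ⊢
      tauto
    · left
      ext ω
      have := Set.ext_iff.1 h ω
      simp only [mem_inter_iff, mem_empty_iff_false, mem_compl_iff] at this ⊢
      tauto
  | iUnion f _ ih =>
    refine ⟨MeasurableSet.iUnion fun n => (ih n).1, ?_⟩
    by_cases h : ∃ n, f n ∩ jumpSet γ t = jumpSet γ t
    · right
      obtain ⟨n, hn⟩ := h
      apply Set.Subset.antisymm inter_subset_right
      intro ω hω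
      rw [← hn] at hω
      exact ⟨mem_iUnion.2 ⟨n, hω.1⟩, hω.2⟩
    · left
      push Not at h
      rw [iUnion_inter, iUnion_eq_empty]
      intro n
      exact ((ih n).2).resolve_right (h n)

lemma jumpσ_le (γ : Ω → ℝ≥0∞) (t : ℝ≥0) : jumpσ m γ t ≤ m :=
  fun _ hB => (mem_jumpColl_of_measurableSet hB).1

lemma jumpσ_mono (γ : Ω → ℝ≥0∞) {s t : ℝ≥0} (h : s ≤ t) : jumpσ m γ s ≤ jumpσ m γ t := by
  intro B hB
  obtain ⟨h1, h2⟩ := mem_jumpColl_of_measurableSet hB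
  apply MeasurableSpace.measurableSet_generateFrom
  refine ⟨h1, ?_⟩
  have hsub : jumpSet γ t ⊆ jumpSet γ s := by
    intro ω hω
    exact (ENNReal.coe_le_coe.2 h).trans_lt hω
  rcases h2 with h2 | h2
  · left
    exact Set.eq_empty_of_subset_empty (by rw [← h2]; exact inter_subset_inter_right _ hsub)
  · right
    apply Set.Subset.antisymm inter_subset_right
    intro ω hω
    have : ω ∈ B ∩ jumpSet γ s := by rw [h2]; exact hsub hω
    exact ⟨this.1, hω⟩

lemma measurable_jumpσ {γ : Ω → ℝ≥0∞} {t : ℝ≥0} {f : Ω → ℝ} (hf : Measurable f) (c : ℝ)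
    (hc : ∀ ω, (t : ℝ≥0∞) < γ ω → f ω = c) : Measurable[jumpσ m γ t] f := by
  intro B hB
  apply MeasurableSpace.measurableSet_generateFrom
  refine ⟨hf hB, ?_⟩
  by_cases h : c ∈ B
  · right
    apply Set.Subset.antisymm inter_subset_right
    intro ω hω
    exact ⟨by simpa [hc ω hω] using h, hω⟩
  · left
    ext ω
    simp only [mem_inter_iff, mem_preimage, mem_empty_iff_false, iff_false, not_and]
    intro h1 h2
    rw [hc ω h2] at h1
    exact h h1

/-- Fubini step. -/
lemma fubini_step (ν : Measure ℝ≥0∞) [IsProbabilityMeasure ν] (k : ℝ≥0∞ → ℝ)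
    (hk : Integrable k ν) (s : ℝ≥0∞) :
    ∫ x in Ioi s, ((∫ y in Iic x, k y ∂ν) - ∫ y in Iic s, k y ∂ν) ∂ν
      = ∫ y in Ioi s, (ν (Ici y)).toReal * k y ∂ν := by
  have hk' : Integrable ((Ioi s).indicator k) ν := hk.indicator measurableSet_Ioi
  have hset : MeasurableSet {p : ℝ≥0∞ × ℝ≥0∞ | p.2 ≤ p.1} :=
    measurableSet_le measurable_snd measurable_fst
  have hprod : Integrable (Function.uncurry fun x y : ℝ≥0∞ =>
      {p : ℝ≥0∞ × ℝ≥0∞ | p.2 ≤ p.1}.indicator (fun p => (Ioi s).indicator k p.2) (x, y))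
      (ν.prod ν) := (hk'.comp_snd ν).indicator hset
  have hsw := integral_integral_swap hprod
  have h1 : ∀ x, (∫ y, {p : ℝ≥0∞ × ℝ≥0∞ | p.2 ≤ p.1}.indicator
      (fun p => (Ioi s).indicator k p.2) (x, y) ∂ν) =
      (Ioi s).indicator (fun x => (∫ y in Iic x, k y ∂ν) - ∫ y in Iic s, k y ∂ν) x := by
    intro x
    have e : (fun y => {p : ℝ≥0∞ × ℝ≥0∞ | p.2 ≤ p.1}.indicator
      (fun p => (Ioi s).indicator k p.2) (x, y)) = (Ioc s x).indicator k := by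
      ext y
      simp only [indicator, mem_ofPred_eq, mem_Ioi, mem_Ioc]
      split_ifs <;> tauto
    rw [e, integral_indicator measurableSet_Ioc]
    by_cases hx : s < x
    · rw [indicator_of_mem (show x ∈ Ioi s from hx), ← Iic_union_Ioc_eq_Iic hx.le,
        setIntegral_union (Iic_disjoint_Ioc le_rfl) measurableSet_Ioc hk.integrableOn
          hk.integrableOn]
      ring
    · rw [indicator_of_notMem (by simpa using hx), Ioc_eq_empty hx]
      simp
  have h2 : ∀ y, (∫ x, {p : ℝ≥0∞ × ℝ≥0∞ | p.2 ≤ p.1}.indicator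
      (fun p => (Ioi s).indicator k p.2) (x, y) ∂ν) =
      (Ioi s).indicator (fun y => (ν (Ici y)).toReal * k y) y := by
    intro y
    have e : (fun x => {p : ℝ≥0∞ × ℝ≥0∞ | p.2 ≤ p.1}.indicator
      (fun p => (Ioi s).indicator k p.2) (x, y)) =
        (Ici y).indicator (fun _ => (Ioi s).indicator k y) := by
      ext x
      simp only [indicator, mem_ofPred_eq, mem_Ici]
      split_ifs <;> rfl
    rw [e, integral_indicator measurableSet_Ici, setIntegral_const]
    by_cases hy : y ∈ Ioi s
    · simp [indicator_of_mem hy, Measure.real]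
    · simp [indicator_of_notMem hy]
  simp_rw [h1, h2] at hsw
  rwa [integral_indicator measurableSet_Ioi, integral_indicator measurableSet_Ioi] at hsw

lemma Phi_tendsto_left (ν : Measure ℝ≥0∞) [IsProbabilityMeasure ν] (k : ℝ≥0∞ → ℝ)
    (hk : Integrable k ν) (a : ℝ≥0∞) :
    Tendsto (fun x => ∫ y in Iic x, k y ∂ν) (𝓝[<] a) (𝓝 (∫ y in Iio a, k y ∂ν)) := by
  simp_rw [← integral_indicator (measurableSet_Iic), ← integral_indicator (measurableSet_Iio)]
  apply tendsto_integral_filter_of_dominated_convergence (fun y => ‖k y‖)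
  · exact Eventually.of_forall fun x => (hk.indicator measurableSet_Iic).aestronglyMeasurable
  · exact Eventually.of_forall fun x => Eventually.of_forall fun y => norm_indicator_le_norm_self _ _
  · exact hk.norm
  · refine Eventually.of_forall fun y => ?_
    apply tendsto_const_nhds.congr'
    by_cases hy : y < a
    · filter_upwards [Ioo_mem_nhdsLT hy] with x hx
      simp [indicator, hx.1.le, hy]
    · filter_upwards [self_mem_nhdsWithin] with x hx
      have : ¬ y ≤ x := fun h => hy (lt_of_le_of_lt h hx)
      simp [indicator, hy, this]

lemma Phi_tendsto_right (ν : Measure ℝ≥0∞) [IsProbabilityMeasure ν] (k : ℝ≥0∞ → ℝ)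
    (hk : Integrable k ν) (a : ℝ≥0∞) :
    Tendsto (fun x => ∫ y in Iic x, k y ∂ν) (𝓝[≥] a) (𝓝 (∫ y in Iic a, k y ∂ν)) := by
  simp_rw [← integral_indicator (measurableSet_Iic)]
  apply tendsto_integral_filter_of_dominated_convergence (fun y => ‖k y‖)
  · exact Eventually.of_forall fun x => (hk.indicator measurableSet_Iic).aestronglyMeasurable
  · exact Eventually.of_forall fun x => Eventually.of_forall fun y => norm_indicator_le_norm_self _ _
  · exact hk.norm
  · refine Eventually.of_forall fun y => ?_
    apply tendsto_const_nhds.congr'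
    by_cases hy : y ≤ a
    · filter_upwards [self_mem_nhdsWithin] with x hx
      have : y ≤ x := hy.trans hx
      simp [indicator, hy, this]
    · filter_upwards [mem_nhdsWithin_of_mem_nhds (Iio_mem_nhds (not_le.1 hy))] with x hx
      have : ¬ y ≤ x := not_le.2 hx
      simp [indicator, hy, this]

lemma coe_tendsto_left (t : ℝ≥0) :
    Tendsto (fun u : ℝ≥0 => (u : ℝ≥0∞)) (𝓝[<] t) (𝓝[<] (t : ℝ≥0∞)) := by
  apply tendsto_nhdsWithin_of_tendsto_nhds_of_eventually_within
  · exact (ENNReal.continuous_coe.tendsto t).mono_left nhdsWithin_le_nhds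
  · filter_upwards [self_mem_nhdsWithin] with u hu
    exact ENNReal.coe_lt_coe.2 hu

lemma coe_tendsto_right (t : ℝ≥0) :
    Tendsto (fun u : ℝ≥0 => (u : ℝ≥0∞)) (𝓝[≥] t) (𝓝[≥] (t : ℝ≥0∞)) := by
  apply tendsto_nhdsWithin_of_tendsto_nhds_of_eventually_within
  · exact (ENNReal.continuous_coe.tendsto t).mono_left nhdsWithin_le_nhds
  · filter_upwards [self_mem_nhdsWithin] with u hu
    exact ENNReal.coe_le_coe.2 hu

/-- The path `t ↦ Φ(t ∧ g) - v 1_{t ≥ g}` is càdlàg. -/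
lemma cadlag_path (ν : Measure ℝ≥0∞) [IsProbabilityMeasure ν] (k : ℝ≥0∞ → ℝ)
    (hk : Integrable k ν) (g : ℝ≥0∞) (v : ℝ) :
    Cadlag fun t : ℝ≥0 => (∫ y in Iic ((t : ℝ≥0∞) ⊓ g), k y ∂ν) -
      if (t : ℝ≥0∞) < g then 0 else v := by
  constructor
  · intro t
    unfold ContinuousWithinAt
    by_cases h : (t : ℝ≥0∞) < g
    · have h0 := ((Phi_tendsto_right ν k hk t).comp (coe_tendsto_right t))
      simp only [inf_eq_left.2 h.le, if_pos h, sub_zero]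
      refine h0.congr' ?_
      have : ∀ᶠ u in 𝓝[≥] (t : ℝ≥0∞), u < g := mem_nhdsWithin_of_mem_nhds (Iio_mem_nhds h)
      filter_upwards [(coe_tendsto_right t).eventually this] with u hu
      simp [inf_eq_left.2 hu.le, if_pos hu]
    · apply tendsto_const_nhds.congr'
      filter_upwards [self_mem_nhdsWithin] with u hu
      have hu' : g ≤ (u : ℝ≥0∞) := (not_lt.1 h).trans (ENNReal.coe_le_coe.2 hu)
      simp [inf_eq_right.2 (not_lt.1 h), h, inf_eq_right.2 hu', not_lt.2 hu']
  · intro t ht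
    by_cases h : (t : ℝ≥0∞) ≤ g
    · refine ⟨_, ((Phi_tendsto_left ν k hk t).comp (coe_tendsto_left t)).congr' ?_⟩
      filter_upwards [self_mem_nhdsWithin] with u hu
      have hu' : (u : ℝ≥0∞) < g := (ENNReal.coe_lt_coe.2 hu).trans_le h
      simp [inf_eq_left.2 hu'.le, if_pos hu']
    · refine ⟨(∫ y in Iic g, k y ∂ν) - v, tendsto_const_nhds.congr' ?_⟩
      have : ∀ᶠ u in 𝓝[<] (t : ℝ≥0∞), g < u :=
        mem_nhdsWithin_of_mem_nhds (Ioi_mem_nhds (not_le.1 h))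
      filter_upwards [(coe_tendsto_left t).eventually this] with u hu
      simp [inf_eq_right.2 hu.le, not_lt.2 hu.le]

lemma Cadlag.of_local {f : ℝ≥0 → ℝ}
    (h : ∀ t, ∃ g, Cadlag g ∧ ∀ᶠ u in 𝓝 t, g u = f u) : Cadlag f := by
  constructor
  · intro t
    obtain ⟨g, hg, hu⟩ := h t
    have := hg.1 t
    unfold ContinuousWithinAt at this ⊢
    rw [← hu.self_of_nhds]
    exact this.congr' (hu.filter_mono nhdsWithin_le_nhds)
  · intro t ht
    obtain ⟨g, hg, hu⟩ := h t
    obtain ⟨c, hc⟩ := hg.2 t ht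
    exact ⟨c, hc.congr' (hu.filter_mono nhdsWithin_le_nhds)⟩

/-- The integrand `Ḡ(x-)⁻¹ K(x)` cut off to `(0,r]`. -/
def kk (μ : Measure Ω) (γ : Ω → ℝ≥0∞) (K : ℝ≥0 → ℝ) (r : ℝ≥0) : ℝ≥0∞ → ℝ :=
  (Ioc 0 (r : ℝ≥0∞)).indicator fun x => (GbarLeft μ γ x.toNNReal)⁻¹ * K x.toNNReal

/-- Admissible times: `r < t_G`, or `r = t_G` in Case B. -/
def Good (μ : Measure Ω) (γ : Ω → ℝ≥0∞) (r : ℝ≥0) : Prop :=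
  (r : ℝ≥0∞) < tG μ γ ∨ (CaseB μ γ ∧ (r : ℝ≥0∞) = tG μ γ)

lemma TT_mono {μ : Measure Ω} {γ : Ω → ℝ≥0∞} {s r : ℝ≥0} (h : s ≤ r) (hr : r ∈ TT μ γ) :
    s ∈ TT μ γ := by
  refine lt_of_lt_of_le (show 0 < μ {ω | (r : ℝ≥0∞) ≤ γ ω} from hr) (measure_mono ?_)
  intro ω hω
  exact (ENNReal.coe_le_coe.2 h).trans hω

lemma caseB_set {μ : Measure Ω} {γ : Ω → ℝ≥0∞} (hB : CaseB μ γ) : tG μ γ < ⊤ := by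
  by_contra h
  unfold CaseB at hB
  simp [h] at hB

lemma Good.mem_TT {μ : Measure Ω} [IsProbabilityMeasure μ] {γ : Ω → ℝ≥0∞} (hγ : Measurable γ)
    {r : ℝ≥0} (h : Good μ γ r) : r ∈ TT μ γ := by
  rcases h with h | ⟨hB, h⟩
  · obtain ⟨_, ⟨t, ht, rfl⟩, hrt⟩ := lt_sSup_iff.1 h
    apply TT_mono (ENNReal.coe_le_coe.1 hrt.le)
    have ht' : μ {ω | γ ω ≤ (t : ℝ≥0∞)} < 1 := ht
    by_contra h0
    have h0' : μ {ω | (t : ℝ≥0∞) ≤ γ ω} = 0 := by simpa [TT] using h0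
    have h1 : μ ({ω | γ ω ≤ (t : ℝ≥0∞)} ∪ {ω | (t : ℝ≥0∞) ≤ γ ω}) = 1 := by
      rw [← measure_univ (μ := μ)]
      congr 1
      ext ω
      simp [le_total]
    have h2 := measure_union_le (μ := μ) {ω | γ ω ≤ (t : ℝ≥0∞)} {ω | (t : ℝ≥0∞) ≤ γ ω}
    rw [h1, h0', add_zero] at h2
    exact absurd ht' (not_lt.2 h2)
  · refine lt_of_lt_of_le hB (measure_mono ?_)
    intro ω hω
    exact (h.trans hω.1.symm).le

lemma ae_le_tG (μ : Measure Ω) [IsProbabilityMeasure μ] {γ : Ω → ℝ≥0∞} (hγ : Measurable γ) :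
    ∀ᵐ ω ∂μ, γ ω ≤ tG μ γ := by
  by_cases htop : tG μ γ = ⊤
  · simp [htop]
  obtain ⟨u, -, hu, hlim⟩ := exists_seq_strictAnti_tendsto' (lt_top_iff_ne_top.2 htop)
  have h1 : ∀ n, ∀ᵐ ω ∂μ, γ ω ≤ u n := by
    intro n
    have hn : u n ≠ ⊤ := (hu n).2.ne
    have h2 : ¬ μ {ω | γ ω ≤ ((u n).toNNReal : ℝ≥0∞)} < 1 := by
      intro h
      have : ((u n).toNNReal : ℝ≥0∞) ≤ tG μ γ := le_sSup ⟨_, h, rfl⟩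
      rw [ENNReal.coe_toNNReal hn] at this
      exact absurd (hu n).1 (not_lt.2 this)
    rw [ENNReal.coe_toNNReal hn] at h2
    have h3 : μ {ω | γ ω ≤ u n} = 1 := le_antisymm prob_le_one (not_lt.1 h2)
    exact (prob_compl_eq_zero_iff (measurableSet_le hγ measurable_const)).2 h3
  filter_upwards [ae_all_iff.2 h1] with ω hω
  exact ge_of_tendsto' hlim hω

lemma tG_pos (μ : Measure Ω) [IsProbabilityMeasure μ] {γ : Ω → ℝ≥0∞} (hγ : Measurable γ)
    (hpos : 0 < μ {ω | 0 < γ ω}) : 0 < tG μ γ := by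
  by_contra h
  have h0 : tG μ γ = 0 := by simpa using h
  have h1 := ae_le_tG μ hγ
  rw [h0] at h1
  have : μ {ω | 0 < γ ω} = 0 := by
    have h2 : μ {ω | ¬ γ ω ≤ 0} = 0 := h1
    simpa only [not_le] using h2
  exact hpos.ne' this

/-- The localizing deterministic times. -/
lemma exists_seq (μ : Measure Ω) [IsProbabilityMeasure μ] {γ : Ω → ℝ≥0∞} (hγ : Measurable γ)
    (hpos : 0 < μ {ω | 0 < γ ω}) :
    ∃ u : ℕ → ℝ≥0, Monotone u ∧ (∀ n, Good μ γ (u n)) ∧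
      ∀ᵐ ω ∂μ, (∃ n, γ ω ≤ u n) ∨ Tendsto (fun n => (u n : ℝ≥0∞)) atTop (𝓝 ⊤) := by
  by_cases hB : CaseB μ γ
  · have ht := (caseB_set hB).ne
    refine ⟨fun _ => (tG μ γ).toNNReal, monotone_const, fun n => Or.inr ⟨hB, ?_⟩, ?_⟩
    · exact ENNReal.coe_toNNReal ht
    · filter_upwards [ae_le_tG μ hγ] with ω hω
      left
      refine ⟨0, ?_⟩
      rwa [ENNReal.coe_toNNReal ht]
  · obtain ⟨u, hmono, hu, hlim⟩ := exists_seq_strictMono_tendsto' (tG_pos μ hγ hpos)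
    have hc : ∀ n, ((u n).toNNReal : ℝ≥0∞) = u n := fun n =>
      ENNReal.coe_toNNReal (hu n).2.ne_top
    refine ⟨fun n => (u n).toNNReal, ?_, ?_, ?_⟩
    · intro a b hab
      rw [← ENNReal.coe_le_coe, hc, hc]
      exact hmono.monotone hab
    · intro n
      left
      rw [hc]
      exact (hu n).2
    · simp_rw [hc]
      by_cases htop : tG μ γ = ⊤
      · rw [htop] at hlim
        exact Eventually.of_forall fun ω => Or.inr hlim
      · have h0 : μ {ω | γ ω = tG μ γ ∧ tG μ γ < ⊤} = 0 := by
          simpa [CaseB] using hB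
        have h1 : ∀ᵐ ω ∂μ, ¬ (γ ω = tG μ γ ∧ tG μ γ < ⊤) := by
          rw [ae_iff]
          simpa only [not_not] using h0
        filter_upwards [ae_le_tG μ hγ, h1] with ω h2 h3
        left
        have h4 : γ ω < tG μ γ :=
          lt_of_le_of_ne h2 fun h => h3 ⟨h, lt_top_iff_ne_top.2 htop⟩
        obtain ⟨n, hn⟩ := (hlim.eventually (lt_mem_nhds h4)).exists
        exact ⟨n, hn.le⟩

lemma GbarLeft_antitone (μ : Measure Ω) [IsProbabilityMeasure μ] (γ : Ω → ℝ≥0∞) :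
    Antitone (GbarLeft μ γ) := by
  intro s t hst
  apply ENNReal.toReal_mono (measure_ne_top _ _)
  apply measure_mono
  intro ω hω
  exact (ENNReal.coe_le_coe.2 hst).trans hω

lemma GbarLeft_pos {μ : Measure Ω} [IsProbabilityMeasure μ] {γ : Ω → ℝ≥0∞} {r : ℝ≥0}
    (hr : r ∈ TT μ γ) : 0 < GbarLeft μ γ r :=
  ENNReal.toReal_pos (ne_of_gt hr) (measure_ne_top _ _)

lemma kk_integrable {μ : Measure Ω} [IsProbabilityMeasure μ] {γ : Ω → ℝ≥0∞}
    {K : ℝ≥0 → ℝ} (hK1 : MemL1loc μ γ K) {r : ℝ≥0}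
    (hr : r ∈ TT μ γ) : Integrable (kk μ γ K r) (μ.map γ) := by
  have h1 : IntegrableOn (fun x : ℝ≥0∞ => K x.toNNReal) (Ioc 0 (r : ℝ≥0∞)) (μ.map γ) :=
    (hK1.2 r hr).mono_set Ioc_subset_Icc_self
  unfold kk
  rw [integrable_indicator_iff measurableSet_Ioc]
  have hm1 : Measurable fun x : ℝ≥0∞ => (GbarLeft μ γ x.toNNReal)⁻¹ :=
    ((GbarLeft_antitone μ γ).measurable.comp ENNReal.measurable_toNNReal).inv
  refine Integrable.bdd_mul (c := (GbarLeft μ γ r)⁻¹) h1 hm1.aestronglyMeasurable ?_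
  refine (ae_restrict_iff' measurableSet_Ioc).2 (Eventually.of_forall fun x hx => ?_)
  have hx' : x.toNNReal ≤ r := by
    have := ENNReal.toNNReal_mono ENNReal.coe_ne_top hx.2
    simpa using this
  have hp := GbarLeft_pos hr
  have hle := GbarLeft_antitone μ γ hx'
  rw [Real.norm_of_nonneg (inv_nonneg.2 (hp.le.trans hle))]
  exact inv_anti₀ hp hle

lemma setIntegral_kk {μ : Measure Ω} {γ : Ω → ℝ≥0∞} {K : ℝ≥0 → ℝ} {r : ℝ≥0} {x : ℝ≥0∞}
    (hx : x ≤ r) : ∫ y in Iic x, kk μ γ K r y ∂(μ.map γ) =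
      ∫ y in Ioc 0 x, (GbarLeft μ γ y.toNNReal)⁻¹ * K y.toNNReal ∂(μ.map γ) := by
  unfold kk
  rw [setIntegral_indicator measurableSet_Ioc]
  congr 2
  ext y
  simp only [mem_inter_iff, mem_Iic, mem_Ioc]
  constructor
  · rintro ⟨h1, h2, h3⟩
    exact ⟨h2, h1⟩
  · rintro ⟨h1, h2⟩
    exact ⟨h2, h1, h2.trans hx⟩

lemma leftF_neBot {a : ℝ≥0∞} (ha : 0 < a) : (leftF a).NeBot := by
  unfold leftF
  rw [comap_neBot_iff_frequently]
  haveI : (𝓝[<] a).NeBot := nhdsLT_neBot_of_exists_lt ⟨0, ha⟩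
  apply Eventually.frequently
  filter_upwards [self_mem_nhdsWithin] with x hx
  exact ⟨x.toNNReal, ENNReal.coe_toNNReal (ne_top_of_lt hx)⟩

/-- For admissible `r` and `t ≤ r`, `A_t = Φ_r(t ∧ γ)`. -/
lemma A_eq {μ : Measure Ω} [IsProbabilityMeasure μ] {γ : Ω → ℝ≥0∞}
    (hγ : Measurable γ) (hpos : 0 < μ {ω | 0 < γ ω})
    {K : ℝ≥0 → ℝ} (hK1 : MemL1loc μ γ K) {F : ℝ≥0 → ℝ}
    (hF : ∀ t : ℝ≥0, (t : ℝ≥0∞) < tG μ γ →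
      F t = ∫ x in Ioc (0 : ℝ≥0∞) (t : ℝ≥0∞),
        (GbarLeft μ γ x.toNNReal)⁻¹ * K x.toNNReal ∂(μ.map γ))
    (hFB : CaseB μ γ → Tendsto F (leftF (tG μ γ)) (𝓝 (F (tG μ γ).toNNReal)))
    {r t : ℝ≥0} (hr : Good μ γ r) (htr : t ≤ r) (ω : Ω) :
    F (((t : ℝ≥0∞) ⊓ γ ω).toNNReal) +
        (if CaseB μ γ ∧ tG μ γ ≤ γ ω ∧ tG μ γ ≤ (t : ℝ≥0∞)
          then K (tG μ γ).toNNReal else 0)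
      = ∫ y in Iic ((t : ℝ≥0∞) ⊓ γ ω), kk μ γ K r y ∂(μ.map γ) := by
  have htr' : (t : ℝ≥0∞) ≤ r := ENNReal.coe_le_coe.2 htr
  have hmin : ((((t : ℝ≥0∞) ⊓ γ ω).toNNReal : ℝ≥0) : ℝ≥0∞) = (t : ℝ≥0∞) ⊓ γ ω :=
    ENNReal.coe_toNNReal (ne_top_of_le_ne_top ENNReal.coe_ne_top inf_le_left)
  have hlt : (t : ℝ≥0∞) ⊓ γ ω < tG μ γ → F (((t : ℝ≥0∞) ⊓ γ ω).toNNReal) =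
      ∫ y in Iic ((t : ℝ≥0∞) ⊓ γ ω), kk μ γ K r y ∂(μ.map γ) := by
    intro h
    rw [setIntegral_kk (inf_le_left.trans htr'), hF _ (by rwa [hmin]), hmin]
  by_cases hc : CaseB μ γ ∧ tG μ γ ≤ γ ω ∧ tG μ γ ≤ (t : ℝ≥0∞)
  · rw [if_pos hc]
    obtain ⟨hB, h1, h2⟩ := hc
    have hrG : (r : ℝ≥0∞) = tG μ γ := by
      rcases hr with h | h
      · exact absurd (h2.trans htr') (not_le.2 h)
      · exact h.2
    have htG : (t : ℝ≥0∞) = tG μ γ := le_antisymm (htr'.trans hrG.le) h2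
    rw [htG, inf_eq_left.2 h1]
    haveI : IsProbabilityMeasure (μ.map γ) := Measure.isProbabilityMeasure_map hγ.aemeasurable
    have hki := kk_integrable hK1 (hr.mem_TT hγ)
    haveI := leftF_neBot (tG_pos μ hγ hpos)
    have hlim : Tendsto F (leftF (tG μ γ))
        (𝓝 (∫ y in Iio (tG μ γ), kk μ γ K r y ∂(μ.map γ))) := by
      have := (Phi_tendsto_left (μ.map γ) _ hki (tG μ γ)).comp
        (tendsto_comap (f := fun t : ℝ≥0 => (t : ℝ≥0∞)))
      refine Tendsto.congr' ?_ this
      have hev : ∀ᶠ u : ℝ≥0 in leftF (tG μ γ), (u : ℝ≥0∞) < tG μ γ :=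
        tendsto_comap.eventually (self_mem_nhdsWithin : Iio (tG μ γ) ∈ 𝓝[<] (tG μ γ))
      filter_upwards [hev] with u hu
      simp only [Function.comp]
      rw [setIntegral_kk (hu.le.trans hrG.ge), hF u hu]
    rw [tendsto_nhds_unique (hFB hB) hlim, ← Iio_insert, ← Set.union_singleton,
      setIntegral_union (by simp) (measurableSet_singleton _) hki.integrableOn hki.integrableOn]
    congr 1
    rw [integral_singleton]
    have hval : kk μ γ K r (tG μ γ) =
        (GbarLeft μ γ (tG μ γ).toNNReal)⁻¹ * K (tG μ γ).toNNReal := by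
      unfold kk
      rw [indicator_of_mem]
      exact ⟨tG_pos μ hγ hpos, hrG.ge⟩
    have hG : (μ.map γ).real {tG μ γ} = GbarLeft μ γ (tG μ γ).toNNReal := by
      unfold GbarLeft Measure.real
      rw [Measure.map_apply hγ (measurableSet_singleton _),
        ENNReal.coe_toNNReal (caseB_set hB).ne]
      congr 1
      apply measure_congr
      filter_upwards [ae_le_tG μ hγ] with ω hω
      apply propext
      change γ ω = tG μ γ ↔ tG μ γ ≤ γ ω
      exact ⟨fun h => h.ge, fun h => le_antisymm hω h⟩
    have hp : 0 < GbarLeft μ γ (tG μ γ).toNNReal := by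
      apply GbarLeft_pos
      have : (tG μ γ).toNNReal = r := by rw [← hrG]; simp
      rw [this]
      exact hr.mem_TT hγ
    rw [hval, hG, smul_eq_mul, mul_inv_cancel_left₀ hp.ne']
  · rw [if_neg hc, add_zero]
    apply hlt
    rcases hr with h | ⟨hB, h⟩
    · exact (inf_le_left.trans htr').trans_lt h
    · by_contra hn
      rw [not_lt, le_inf_iff] at hn
      exact hc ⟨hB, hn.2, hn.1⟩

lemma map_Ici {μ : Measure Ω} {γ : Ω → ℝ≥0∞} (hγ : Measurable γ) {y : ℝ≥0∞} (hy : y ≠ ⊤) :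
    ((μ.map γ) (Ici y)).toReal = GbarLeft μ γ y.toNNReal := by
  unfold GbarLeft
  rw [Measure.map_apply hγ measurableSet_Ici, ENNReal.coe_toNNReal hy]
  rfl

lemma kk_Phi_min {μ : Measure Ω} {γ : Ω → ℝ≥0∞} {K : ℝ≥0 → ℝ} {r : ℝ≥0} (x : ℝ≥0∞) :
    ∫ y in Iic ((r : ℝ≥0∞) ⊓ x), kk μ γ K r y ∂(μ.map γ) =
      ∫ y in Iic x, kk μ γ K r y ∂(μ.map γ) := by
  unfold kk
  rw [setIntegral_indicator measurableSet_Ioc, setIntegral_indicator measurableSet_Ioc]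
  congr 2
  ext y
  simp only [mem_inter_iff, mem_Iic, mem_Ioc, le_inf_iff]
  tauto

lemma integral_V {μ : Measure Ω} [IsProbabilityMeasure μ] {γ : Ω → ℝ≥0∞}
    (hγ : Measurable γ) {V : Ω → ℝ}
    (hVint : ∀ t ∈ TT μ γ,
      Integrable (fun ω => ({ω' | γ ω' ≤ (t : ℝ≥0∞)}.indicator V) ω) μ)
    {K : ℝ≥0 → ℝ} (hK1 : MemL1loc μ γ K)
    (hK : ∀ t ∈ TT μ γ,
      ∫ ω in {ω | γ ω ≤ (t : ℝ≥0∞)}, V ω ∂μ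
        = ∫ x in Icc (0 : ℝ≥0∞) (t : ℝ≥0∞), K x.toNNReal ∂(μ.map γ))
    {s r : ℝ≥0} (hr : r ∈ TT μ γ) (hsr : s ≤ r) :
    ∫ ω in {ω | (s : ℝ≥0∞) < γ ω ∧ γ ω ≤ r}, V ω ∂μ
      = ∫ x in Ioc (s : ℝ≥0∞) r, K x.toNNReal ∂(μ.map γ) := by
  have hs := TT_mono hsr hr
  have hsr' : (s : ℝ≥0∞) ≤ r := ENNReal.coe_le_coe.2 hsr
  have hms : ∀ t : ℝ≥0, MeasurableSet {ω | γ ω ≤ (t : ℝ≥0∞)} := fun t =>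
    measurableSet_le hγ measurable_const
  have hI : IntegrableOn V {ω | γ ω ≤ (r : ℝ≥0∞)} μ :=
    (integrable_indicator_iff (hms r)).1 (hVint r hr)
  have hm2 : MeasurableSet {ω | (s : ℝ≥0∞) < γ ω ∧ γ ω ≤ r} :=
    (measurableSet_lt measurable_const hγ).inter (hms r)
  have e1 : {ω | γ ω ≤ (r : ℝ≥0∞)} =
      {ω | γ ω ≤ (s : ℝ≥0∞)} ∪ {ω | (s : ℝ≥0∞) < γ ω ∧ γ ω ≤ r} := by
    ext ω
    simp only [mem_union, mem_ofPred_eq]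
    constructor
    · intro h
      rcases le_or_gt (γ ω) s with h' | h'
      · exact Or.inl h'
      · exact Or.inr ⟨h', h⟩
    · rintro (h | h)
      · exact h.trans hsr'
      · exact h.2
  have d1 : Disjoint {ω | γ ω ≤ (s : ℝ≥0∞)} {ω | (s : ℝ≥0∞) < γ ω ∧ γ ω ≤ r} := by
    rw [Set.disjoint_left]
    intro ω h1 h2
    exact absurd h2.1 (not_lt.2 h1)
  have i1 := hI
  rw [e1] at i1
  have h1 := hK r hr
  rw [e1, setIntegral_union d1 hm2 i1.left_of_union i1.right_of_union, hK s hs] at h1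
  have i2 := hK1.2 r hr
  have e2 : Icc (0 : ℝ≥0∞) r = Icc 0 (s : ℝ≥0∞) ∪ Ioc (s : ℝ≥0∞) r :=
    (Icc_union_Ioc_eq_Icc zero_le hsr').symm
  rw [e2] at i2 h1
  rw [setIntegral_union _ measurableSet_Ioc i2.left_of_union i2.right_of_union] at h1
  · linarith
  · rw [Set.disjoint_left]
    intro x h1 h2
    exact absurd h2.1 (not_lt.2 h1.2)

lemma key_identity {μ : Measure Ω} [IsProbabilityMeasure μ] {γ : Ω → ℝ≥0∞}
    (hγ : Measurable γ) {V : Ω → ℝ}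
    (hVint : ∀ t ∈ TT μ γ,
      Integrable (fun ω => ({ω' | γ ω' ≤ (t : ℝ≥0∞)}.indicator V) ω) μ)
    {K : ℝ≥0 → ℝ} (hK1 : MemL1loc μ γ K)
    (hK : ∀ t ∈ TT μ γ,
      ∫ ω in {ω | γ ω ≤ (t : ℝ≥0∞)}, V ω ∂μ
        = ∫ x in Icc (0 : ℝ≥0∞) (t : ℝ≥0∞), K x.toNNReal ∂(μ.map γ))
    {s r : ℝ≥0} (hr : r ∈ TT μ γ) (hsr : s ≤ r) :
    ∫ ω in {ω | (s : ℝ≥0∞) < γ ω},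
      (((∫ y in Iic ((r : ℝ≥0∞) ⊓ γ ω), kk μ γ K r y ∂(μ.map γ)) -
        ∫ y in Iic (s : ℝ≥0∞), kk μ γ K r y ∂(μ.map γ))
        - {ω' | γ ω' ≤ (r : ℝ≥0∞)}.indicator V ω) ∂μ = 0 := by
  have : IsProbabilityMeasure (μ.map γ) := Measure.isProbabilityMeasure_map hγ.aemeasurable
  have hki := kk_integrable hK1 hr
  have hms : MeasurableSet {ω | γ ω ≤ (r : ℝ≥0∞)} := measurableSet_le hγ measurable_const
  have hPm : Measurable fun x : ℝ≥0∞ => ∫ y in Iic x, kk μ γ K r y ∂(μ.map γ) := by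
    have hset : MeasurableSet {p : ℝ≥0∞ × ℝ≥0∞ | p.2 ≤ p.1} :=
      measurableSet_le measurable_snd measurable_fst
    have hkm : Measurable (kk μ γ K r) := by
      unfold kk
      refine Measurable.indicator ?_ measurableSet_Ioc
      exact (((GbarLeft_antitone μ γ).measurable.comp ENNReal.measurable_toNNReal).inv).mul
        (hK1.1.comp ENNReal.measurable_toNNReal)
    have h := ((hkm.comp measurable_snd).indicator hset).stronglyMeasurable.integral_prod_right'
      (ν := μ.map γ)
    have e : (fun x : ℝ≥0∞ => ∫ y in Iic x, kk μ γ K r y ∂(μ.map γ)) = fun x =>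
        ∫ y, {p : ℝ≥0∞ × ℝ≥0∞ | p.2 ≤ p.1}.indicator (kk μ γ K r ∘ Prod.snd) (x, y)
          ∂(μ.map γ) := by
      ext x
      rw [← integral_indicator measurableSet_Iic]
      congr 1
    rw [e]
    exact h.measurable
  have hPb : ∀ x : ℝ≥0∞, ‖∫ y in Iic x, kk μ γ K r y ∂(μ.map γ)‖ ≤
      ∫ y, ‖kk μ γ K r y‖ ∂(μ.map γ) := fun x =>
    (norm_integral_le_integral_norm _).trans
      (setIntegral_le_integral hki.norm (Eventually.of_forall fun y => norm_nonneg _))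
  have hPi : Integrable (fun x : ℝ≥0∞ => ∫ y in Iic x, kk μ γ K r y ∂(μ.map γ)) (μ.map γ) :=
    Integrable.of_bound hPm.aestronglyMeasurable _ (Eventually.of_forall hPb)
  simp_rw [kk_Phi_min]
  have hPi' := hPi.comp_measurable hγ
  rw [integral_sub, sub_eq_zero]
  · have h1 := setIntegral_map (μ := μ) (g := γ) (s := Ioi (s : ℝ≥0∞)) measurableSet_Ioi
      (f := fun x => (∫ y in Iic x, kk μ γ K r y ∂(μ.map γ)) -
        ∫ y in Iic (s : ℝ≥0∞), kk μ γ K r y ∂(μ.map γ))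
      (hPm.sub_const _).aestronglyMeasurable hγ.aemeasurable
    have h2 : γ ⁻¹' (Ioi (s : ℝ≥0∞)) = {ω | (s : ℝ≥0∞) < γ ω} := rfl
    rw [h2] at h1
    rw [← h1, fubini_step _ _ hki, setIntegral_indicator hms]
    have h3 : {ω | (s : ℝ≥0∞) < γ ω} ∩ {ω | γ ω ≤ (r : ℝ≥0∞)} =
      {ω | (s : ℝ≥0∞) < γ ω ∧ γ ω ≤ r} := rfl
    rw [h3, integral_V hγ hVint hK1 hK hr hsr, ← integral_indicator measurableSet_Ioi,
      ← integral_indicator measurableSet_Ioc]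
    congr 1
    ext y
    by_cases hy : y ∈ Ioc (s : ℝ≥0∞) r
    · rw [indicator_of_mem hy, indicator_of_mem (show y ∈ Ioi (s : ℝ≥0∞) from hy.1)]
      have hyt : y ≠ ⊤ := ne_top_of_le_ne_top ENNReal.coe_ne_top hy.2
      have hyr : y.toNNReal ≤ r := by
        rw [← ENNReal.coe_le_coe, ENNReal.coe_toNNReal hyt]
        exact hy.2
      have hp := GbarLeft_pos (TT_mono hyr hr)
      rw [map_Ici hγ hyt]
      unfold kk
      rw [indicator_of_mem (show y ∈ Ioc (0 : ℝ≥0∞) r from ⟨zero_le.trans_lt hy.1, hy.2⟩),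
        mul_inv_cancel_left₀ hp.ne']
    · rw [indicator_of_notMem hy]
      by_cases hy' : y ∈ Ioi (s : ℝ≥0∞)
      · rw [indicator_of_mem hy']
        unfold kk
        rw [indicator_of_notMem, mul_zero]
        exact fun h => hy ⟨hy', h.2⟩
      · rw [indicator_of_notMem hy']
  · exact (hPi'.sub (integrable_const _)).integrableOn
  · exact (hVint r hr).integrableOn

/-- The abstract part: a process with the right structure is a local martingale. -/
lemma localMartingale_of {μ : Measure Ω} [IsProbabilityMeasure μ] {γ : Ω → ℝ≥0∞}
    (hγ : Measurable γ) {M : ℝ≥0 → Ω → ℝ} {good : ℝ≥0 → Prop}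
    (hmeas : ∀ t, Measurable[jumpσ m γ t] (M t))
    (hcad : ∀ᵐ ω ∂μ, Cadlag fun t => M t ω)
    (hconst : ∀ (r t : ℝ≥0) ω, γ ω ≤ r → r ≤ t → M t ω = M r ω)
    {u : ℕ → ℝ≥0} (hu : Monotone u) (hug : ∀ n, good (u n))
    (hlim : ∀ᵐ ω ∂μ, (∃ n, γ ω ≤ u n) ∨ Tendsto (fun n => (u n : ℝ≥0∞)) atTop (𝓝 ⊤))
    (hint : ∀ r, good r → ∀ t ≤ r, Integrable (M t) μ)
    (hzero : ∀ r, good r → ∀ s ≤ r,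
      ∫ ω in {ω | (s : ℝ≥0∞) < γ ω}, (M r ω - M s ω) ∂μ = 0) :
    LocalMartingale μ γ M := by
  have hmart : ∀ r, good r → ∀ s ≤ r, M s =ᵐ[μ] μ[M r|jumpσ m γ s] := by
    intro r hr s hs
    have ir := hint r hr r le_rfl
    have is := hint r hr s hs
    refine ae_eq_condExp_of_forall_setIntegral_eq (jumpσ_le γ s) ir
      (fun _ _ _ => is.integrableOn) ?_ (hmeas s).aestronglyMeasurable
    intro B hB _
    obtain ⟨hBm, hB2⟩ := mem_jumpColl_of_measurableSet hB
    have hz : ∫ ω in B, (M r ω - M s ω) ∂μ = 0 := by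
      have e : ∫ ω in B, (M r ω - M s ω) ∂μ = ∫ ω in B ∩ jumpSet γ s, (M r ω - M s ω) ∂μ := by
        apply setIntegral_eq_of_subset_of_forall_sdiff_eq_zero hBm inter_subset_left
        rintro ω ⟨h1, h2⟩
        have h3 : γ ω ≤ s := by
          by_contra h
          exact h2 ⟨h1, not_le.1 h⟩
        rw [hconst s r ω h3 hs, sub_self]
      rw [e]
      rcases hB2 with h | h
      · rw [h]
        simp
      · rw [h]
        exact hzero r hr s hs
    rw [integral_sub ir.integrableOn is.integrableOn] at hz
    linarith
  refine ⟨hmeas, hcad, fun n ω => if γ ω ≤ u n then ⊤ else (u n : ℝ≥0∞), ?_, ?_, ?_⟩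
  · intro n t
    have e : {ω | (if γ ω ≤ u n then ⊤ else (u n : ℝ≥0∞)) ≤ (t : ℝ≥0∞)} =
        if u n ≤ t then {ω | (u n : ℝ≥0∞) < γ ω} else ∅ := by
      ext ω
      by_cases h1 : γ ω ≤ u n <;> by_cases h2 : u n ≤ t <;> simp [h1, h2] <;>
        simpa using h1
    rw [e]
    split_ifs with h
    · refine ⟨measurableSet_lt measurable_const hγ, Or.inr ?_⟩
      apply inter_eq_right.2
      intro ω hω
      exact (ENNReal.coe_le_coe.2 h).trans_lt hω
    · exact ⟨MeasurableSet.empty, Or.inl (by simp)⟩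
  · filter_upwards [hlim] with ω hω
    have hmono : Monotone fun n => if γ ω ≤ u n then ⊤ else (u n : ℝ≥0∞) := by
      intro a b hab
      have hab' : (u a : ℝ≥0∞) ≤ u b := ENNReal.coe_le_coe.2 (hu hab)
      simp only
      split_ifs with h1 h2
      · exact le_rfl
      · exact absurd (h1.trans hab') h2
      · exact le_top
      · exact hab'
    refine ⟨hmono, ?_⟩
    rcases hω with ⟨n, hn⟩ | h
    · apply tendsto_const_nhds.congr'
      filter_upwards [eventually_ge_atTop n] with k hk
      rw [if_pos (hn.trans (ENNReal.coe_le_coe.2 (hu hk)))]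
    · apply tendsto_nhds_top_mono' h
      intro k
      simp only
      split_ifs
      · exact le_top
      · exact le_rfl
  · intro n
    have hst : stopped M (fun ω => if γ ω ≤ u n then ⊤ else (u n : ℝ≥0∞)) =
        fun t => M (t ⊓ u n) := by
      ext t ω
      unfold stopped
      simp only
      split_ifs with h
      · simp only [le_top, inf_of_le_left, ENNReal.toNNReal_coe]
        rcases le_total t (u n) with h' | h'
        · rw [inf_eq_left.2 h']
        · rw [inf_eq_right.2 h', hconst (u n) t ω h h']
      · congr 1
    rw [hst]
    have hg := hug n
    have hcond : ∀ t, μ[M (u n)|jumpσ m γ (t ⊓ u n)] =ᵐ[μ] M (t ⊓ u n) := fun t =>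
      (hmart _ hg _ inf_le_right).symm
    refine ⟨⟨?_, ?_, ?_⟩, ?_⟩
    · intro t _
      exact (hmeas _).mono (jumpσ_mono γ inf_le_left) le_rfl
    · intro t _
      exact hint _ hg _ inf_le_right
    · intro s _ t _ hst
      beta_reduce
      rcases le_total s (u n) with h | h
      · have h1 : μ[M (t ⊓ u n)|jumpσ m γ s] =ᵐ[μ]
            μ[μ[M (u n)|jumpσ m γ (t ⊓ u n)]|jumpσ m γ s] :=
          condExp_congr_ae (hcond t).symm
        have h2 := condExp_condExp_of_le (μ := μ) (f := M (u n))
          (jumpσ_mono (m := m) γ (le_inf hst h)) (jumpσ_le γ (t ⊓ u n))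
        have h3 := hcond s
        rw [inf_eq_left.2 h] at h3 ⊢
        exact (h1.trans h2).trans h3
      · rw [inf_eq_right.2 h, inf_eq_right.2 (h.trans hst)]
        rw [condExp_of_stronglyMeasurable (jumpσ_le γ s)
          ((hmeas (u n)).mono (jumpσ_mono γ h) le_rfl).stronglyMeasurable
          (hint _ hg _ le_rfl)]
    · exact ((hint _ hg _ le_rfl).uniformIntegrable_condExp
        (fun t => jumpσ_le γ (t ⊓ u n))).ae_eq hcond

/-- **Theorem 6.** Let `V` satisfy `{γ=0} ⊆ {V=0}` and `E(|V|·1_{γ≤t}) < ∞` for `t ∈ 𝒯`,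
let `K(t) = E[V | γ = t]` (i.e. `E(V·1_{γ≤t}) = ∫_{[0,t]} K dG` for `t ∈ 𝒯`), and let
`F(t) = ∫_(0,t] Ḡ(s−)⁻¹ K(s) dG(s)` for `t < t_G`, with `F(t_G) = lim_{t↑t_G} F(t)` in
Case B. With `A_t = F(t ∧ γ)` in Case A and
`A_t = F(t ∧ γ) + K(t_G)·1_{γ ≥ t_G}·1_{t ≥ t_G}` in Case B, the process `M = A − X`,
where `X_t = V·1_{t≥γ}`, is a local martingale (so `A` is the compensator of `X`). -/
theorem stmt_18 (μ : Measure Ω) [IsProbabilityMeasure μ] (γ : Ω → ℝ≥0∞)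
    (hγ : Measurable γ) (hpos : 0 < μ {ω | 0 < γ ω})
    (V : Ω → ℝ) (hV : Measurable V) (hV0 : ∀ ω, γ ω = 0 → V ω = 0)
    (hVint : ∀ t ∈ TT μ γ,
      Integrable (fun ω => ({ω' | γ ω' ≤ (t : ℝ≥0∞)}.indicator V) ω) μ)
    (K : ℝ≥0 → ℝ) (hK1 : MemL1loc μ γ K)
    (hK : ∀ t ∈ TT μ γ,
      ∫ ω in {ω | γ ω ≤ (t : ℝ≥0∞)}, V ω ∂μ
        = ∫ x in Icc (0 : ℝ≥0∞) (t : ℝ≥0∞), K x.toNNReal ∂(μ.map γ))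
    (F : ℝ≥0 → ℝ) (hFmeas : Measurable F)
    (hF : ∀ t : ℝ≥0, (t : ℝ≥0∞) < tG μ γ →
      F t = ∫ x in Ioc (0 : ℝ≥0∞) (t : ℝ≥0∞),
        (GbarLeft μ γ x.toNNReal)⁻¹ * K x.toNNReal ∂(μ.map γ))
    (hFB : CaseB μ γ → Tendsto F (leftF (tG μ γ)) (𝓝 (F (tG μ γ).toNNReal)))
    (A : ℝ≥0 → Ω → ℝ)
    (hA : A = fun (t : ℝ≥0) (ω : Ω) =>
      F (((t : ℝ≥0∞) ⊓ γ ω).toNNReal) +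
        if CaseB μ γ ∧ tG μ γ ≤ γ ω ∧ tG μ γ ≤ (t : ℝ≥0∞)
          then K (tG μ γ).toNNReal else 0) :
    LocalMartingale μ γ
      (fun (t : ℝ≥0) (ω : Ω) =>
        A t ω - if (t : ℝ≥0∞) < γ ω then 0 else V ω) := by
  have : IsProbabilityMeasure (μ.map γ) := Measure.isProbabilityMeasure_map hγ.aemeasurable
  obtain ⟨u, hu, hug, hlim⟩ := exists_seq μ hγ hpos
  have hAeq : ∀ r, Good μ γ r → ∀ t ≤ r, ∀ ω, A t ω =
      ∫ y in Iic ((t : ℝ≥0∞) ⊓ γ ω), kk μ γ K r y ∂(μ.map γ) := by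
    intro r hr t ht ω
    rw [hA]
    exact A_eq hγ hpos hK1 hF hFB hr ht ω
  have hAm : ∀ t, Measurable (A t) := by
    intro t
    rw [hA]
    refine Measurable.add
      (hFmeas.comp (ENNReal.measurable_toNNReal.comp (measurable_const.min hγ))) ?_
    refine Measurable.ite ?_ measurable_const measurable_const
    by_cases h : CaseB μ γ ∧ tG μ γ ≤ (t : ℝ≥0∞)
    · simp only [h.1, h.2, true_and, and_true]
      exact measurableSet_le measurable_const hγ
    · have e : {ω | CaseB μ γ ∧ tG μ γ ≤ γ ω ∧ tG μ γ ≤ (t : ℝ≥0∞)} = ∅ := by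
        ext ω
        simp only [mem_ofPred_eq, mem_empty_iff_false, iff_false]
        tauto
      rw [e]
      exact MeasurableSet.empty
  have hXm : ∀ t : ℝ≥0, Measurable fun ω => if (t : ℝ≥0∞) < γ ω then 0 else V ω := fun t =>
    Measurable.ite (measurableSet_lt measurable_const hγ) measurable_const hV
  have hX : ∀ (t : ℝ≥0) ω, (if (t : ℝ≥0∞) < γ ω then 0 else V ω) =
      {ω' | γ ω' ≤ (t : ℝ≥0∞)}.indicator V ω := by
    intro t ω
    by_cases h : (t : ℝ≥0∞) < γ ω
    · rw [if_pos h, indicator_of_notMem]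
      exact not_le.2 h
    · rw [if_neg h, indicator_of_mem]
      exact not_lt.1 h
  have hconst : ∀ (r t : ℝ≥0) ω, γ ω ≤ r → r ≤ t →
      (A t ω - if (t : ℝ≥0∞) < γ ω then 0 else V ω) =
        A r ω - if (r : ℝ≥0∞) < γ ω then 0 else V ω := by
    intro r t ω h1 h2
    have h3 : γ ω ≤ t := h1.trans (ENNReal.coe_le_coe.2 h2)
    rw [if_neg (not_lt.2 h1), if_neg (not_lt.2 h3), hA]
    simp only [inf_eq_right.2 h1, inf_eq_right.2 h3]
    congr 2
    have : (CaseB μ γ ∧ tG μ γ ≤ γ ω ∧ tG μ γ ≤ (t : ℝ≥0∞)) ↔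
        (CaseB μ γ ∧ tG μ γ ≤ γ ω ∧ tG μ γ ≤ (r : ℝ≥0∞)) :=
      ⟨fun h => ⟨h.1, h.2.1, h.2.1.trans h1⟩, fun h => ⟨h.1, h.2.1, h.2.1.trans h3⟩⟩
    simp only [this]
  refine localMartingale_of hγ (good := Good μ γ) ?_ ?_ hconst hu hug hlim ?_ ?_
  · intro t
    refine measurable_jumpσ ((hAm t).sub (hXm t))
      (F t + if CaseB μ γ ∧ tG μ γ ≤ (t : ℝ≥0∞) then K (tG μ γ).toNNReal else 0) ?_
    intro ω hω
    rw [if_pos hω, hA, sub_zero]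
    simp only [inf_eq_left.2 hω.le, ENNReal.toNNReal_coe]
    congr 1
    have : (CaseB μ γ ∧ tG μ γ ≤ γ ω ∧ tG μ γ ≤ (t : ℝ≥0∞)) ↔
        (CaseB μ γ ∧ tG μ γ ≤ (t : ℝ≥0∞)) :=
      ⟨fun h => ⟨h.1, h.2.2⟩, fun h => ⟨h.1, h.2.trans hω.le, h.2⟩⟩
    simp only [this]
  · filter_upwards [hlim] with ω hω
    apply Cadlag.of_local
    intro t
    have hcase : ∃ n, γ ω ≤ u n ∨ t < u n := by
      rcases hω with ⟨n, hn⟩ | h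
      · exact ⟨n, Or.inl hn⟩
      · obtain ⟨n, hn⟩ := (h.eventually (lt_mem_nhds (ENNReal.coe_lt_top (r := t)))).exists
        exact ⟨n, Or.inr (ENNReal.coe_lt_coe.1 hn)⟩
    obtain ⟨n, hn⟩ := hcase
    refine ⟨_, cadlag_path (μ.map γ) (kk μ γ K (u n))
      (kk_integrable hK1 ((hug n).mem_TT hγ)) (γ ω) (V ω), ?_⟩
    have hle : ∀ t' ≤ u n, ((∫ y in Iic ((t' : ℝ≥0∞) ⊓ γ ω), kk μ γ K (u n) y ∂(μ.map γ)) -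
        if (t' : ℝ≥0∞) < γ ω then 0 else V ω) =
          A t' ω - if (t' : ℝ≥0∞) < γ ω then 0 else V ω := by
      intro t' ht'
      rw [hAeq (u n) (hug n) t' ht' ω]
    rcases hn with hn | hn
    · refine Eventually.of_forall fun t' => ?_
      rcases le_total t' (u n) with h | h
      · exact hle t' h
      · have h3 : γ ω ≤ t' := hn.trans (ENNReal.coe_le_coe.2 h)
        rw [hconst (u n) t' ω hn h, ← hle (u n) le_rfl, inf_eq_right.2 h3, inf_eq_right.2 hn,
          if_neg (not_lt.2 hn), if_neg (not_lt.2 h3)]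
    · filter_upwards [Iio_mem_nhds hn] with t' ht'
      exact hle t' (le_of_lt ht')
  · intro r hr t ht
    have hki := kk_integrable hK1 (hr.mem_TT hγ)
    refine Integrable.sub ?_ ?_
    · refine Integrable.of_bound (hAm t).aestronglyMeasurable
        (∫ y, ‖kk μ γ K r y‖ ∂(μ.map γ)) (Eventually.of_forall fun ω => ?_)
      rw [hAeq r hr t ht ω]
      exact (norm_integral_le_integral_norm _).trans
        (setIntegral_le_integral hki.norm (Eventually.of_forall fun y => norm_nonneg _))
    · simp_rw [hX]
      exact hVint t (TT_mono ht (hr.mem_TT hγ))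
  · intro r hr s hs
    refine Eq.trans ?_ (key_identity hγ hVint hK1 hK (hr.mem_TT hγ) hs)
    apply setIntegral_congr_fun (measurableSet_lt measurable_const hγ)
    intro ω hω
    have hω' : (s : ℝ≥0∞) < γ ω := hω
    simp only
    rw [hAeq r hr r le_rfl ω, hAeq r hr s hs ω, if_pos hω', hX, inf_eq_left.2 hω'.le]
    ring

end WithMeasurableSpace

end SingleJump
end
end
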